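/- arXiv:2112.01647 — 4 statements merged into one kernel-verified Lean document; each statement's English description precedes it below -/
import Mathlib

section
/- Let d ≥ 3, let 0 < δ ≤ 1/10, and let G be a d-regular graph on n vertices that is bicycle-free at radius r. If 3 ≤ k ≤ e^{δr}, then the total number of singleton-free (k−1)-hikes in G is at most (2^{γ₂}·√(d−1))^{2k}, where γ₂ = log₂(16·n·k³·r·d)/(2k) + log₂(rk)/r + H₂(5δ)/2 + δ·log₂(d). -/
open scoped Classical

noncomputable section

/-- The ball of radius `r` about `v` in `G` (within the connected component of `v`). -/
def gBall {V : Type*} (G : SimpleGraph V) (v : V) (r : ℕ) : Set V :=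
  {u | G.Reachable v u ∧ G.dist v u ≤ r}

/-- `G` is bicycle-free at radius `r`: the subgraph induced on every ball of radius `r`
has at most as many edges as vertices. -/
def BicycleFree {V : Type*} (G : SimpleGraph V) (r : ℕ) : Prop :=
  ∀ v : V,
    (G.edgeSet ∩ {e : Sym2 V | ∀ x ∈ e, x ∈ gBall G v r}).ncard ≤ (gBall G v r).ncard

/-- A `k`-hike in `G`: a closed walk `v₀, …, v_{2k}` with `v₀ = v_{2k}` in which every
step except possibly the `(k+1)`-st is non-backtracking. -/
def IsHike {V : Type*} (G : SimpleGraph V) (k : ℕ) (f : Fin (2 * k + 1) → V) : Prop :=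
  (∀ (i : ℕ) (h : i < 2 * k), G.Adj (f ⟨i, by omega⟩) (f ⟨i + 1, by omega⟩)) ∧
  f ⟨2 * k, by omega⟩ = f ⟨0, by omega⟩ ∧
  ∀ (i : ℕ) (h1 : 1 ≤ i) (h2 : i < 2 * k), i ≠ k → f ⟨i + 1, by omega⟩ ≠ f ⟨i - 1, by omega⟩

/-- The number of steps of the closed walk `f` traversing the undirected edge `e`. -/
def edgeCount {V : Type*} [DecidableEq V] (k : ℕ) (f : Fin (2 * k + 1) → V)
    (e : Sym2 V) : ℕ :=
  (Finset.univ.filter fun i : Fin (2 * k) =>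
    s(f ⟨i.1, Nat.lt_succ_of_lt i.2⟩, f ⟨i.1 + 1, Nat.succ_lt_succ i.2⟩) = e).card

/-- A hike is singleton-free if no edge is traversed exactly once. -/
def IsSingletonFree {V : Type*} [DecidableEq V] (k : ℕ) (f : Fin (2 * k + 1) → V) : Prop :=
  ∀ e : Sym2 V, edgeCount k f e ≠ 1

/-- The binary entropy function `H₂`. -/
def binEnt (x : ℝ) : ℝ := -x * Real.logb 2 x - (1 - x) * Real.logb 2 (1 - x)


def NBk {W : Type*} (l : List W) : Prop :=
  ∀ i, (h : i + 2 < l.length) → l[i] ≠ l[i+2]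

theorem NBk.left {W : Type*} {l1 l2 : List W} (h : NBk (l1 ++ l2)) : NBk l1 := by
  intro i hi
  have := h i (by simp; omega)
  grind

theorem NBk.right {W : Type*} {l1 l2 : List W} (h : NBk (l1 ++ l2)) : NBk l2 := by
  intro i hi
  have := h (l1.length + i) (by simp; omega)
  grind

theorem NBk.tail {W : Type*} {x : W} {l : List W} (h : NBk (x :: l)) : NBk l :=
  NBk.right (l1 := [x]) h

theorem edges_chain_of_nb {W : Type*} {T : SimpleGraph W} : ∀ {u v : W} (p : T.Walk u v),
    NBk p.support → p.edges.IsChain (· ≠ ·)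
  | _, _, .nil => by simp
  | _, _, .cons h .nil => by simp
  | u, _, .cons (v := x) h (.cons (v := y) h' p) => by
    intro hn
    have ih := edges_chain_of_nb (.cons h' p) (by simpa using NBk.tail hn)
    have := hn 0 (by simp)
    simp only [SimpleGraph.Walk.edges_cons] at ih ⊢
    refine List.IsChain.cons_cons ?_ ih
    intro he
    have h2 : u ≠ y := by
      have h3 := this
      cases p <;> simpa using h3
    rw [Sym2.eq_iff] at he
    rcases he with ⟨h1, -⟩ | ⟨h1, -⟩
    · exact h.ne h1
    · exact h2 h1

theorem nb_unique {W : Type*} {T : SimpleGraph W} (hT : T.IsAcyclic) {l l' : List W}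
    (hl : l.IsChain T.Adj) (hl' : l'.IsChain T.Adj) (hn : NBk l) (hn' : NBk l')
    (hne : l ≠ []) (hh : l.head? = l'.head?) (hla : l.getLast? = l'.getLast?) : l = l' := by
  have hne' : l' ≠ [] := by
    rintro rfl; simp at hh; exact hne hh
  have key : ∀ {u v u' v' : W} (p : T.Walk u v) (q : T.Walk u' v'), u = u' → v = v' →
      NBk p.support → NBk q.support → p.support = q.support := by
    intro u v u' v' p q h1 h2 hp hq
    subst h1 h2
    have a := (hT.isPath_iff_isChain p).2 (edges_chain_of_nb p hp)
    have b := (hT.isPath_iff_isChain q).2 (edges_chain_of_nb q hq)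
    have := (hT.subsingleton_path u v).elim ⟨p, a⟩ ⟨q, b⟩
    rw [Subtype.mk.injEq] at this
    rw [this]
  have := key (.ofSupport l hne hl) (.ofSupport l' hne' hl') 
    (by rw [List.head?_eq_some_head hne, List.head?_eq_some_head hne'] at hh; simpa using hh)
    (by rw [List.getLast?_eq_some_getLast hne, List.getLast?_eq_some_getLast hne'] at hla; simpa using hla)
    (by simpa using hn) (by simpa using hn')
  simpa using this

def FC {W : Type*} (T : SimpleGraph W) (a b : W) (l : List W) : Prop :=
  ∃ l1 l2, l = l1 ++ l2 ∧ l1.IsChain T.Adj ∧ l1.getLast? = some a ∧ l2.head? = some b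

theorem fc_cases {W : Type*} {T H : SimpleGraph W} {a b : W}
    (hH : ∀ x y, H.Adj x y → T.Adj x y ∨ (x = a ∧ y = b) ∨ (x = b ∧ y = a)) :
    ∀ l : List W, l.IsChain H.Adj → l.IsChain T.Adj ∨ FC T a b l ∨ FC T b a l
  | [], _ => by simp
  | [x], _ => by simp
  | x :: y :: l, h => by
    rw [List.isChain_cons_cons] at h
    rcases hH x y h.1 with h1 | ⟨rfl, rfl⟩ | ⟨rfl, rfl⟩
    · rcases fc_cases hH (y :: l) h.2 with h2 | h2 | h2
      · left; exact List.isChain_cons_cons.2 ⟨h1, h2⟩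
      · right; left
        obtain ⟨l1, l2, e, h3, h4, h5⟩ := h2
        cases l1 with
        | nil => simp at h4
        | cons z l1 =>
          simp only [List.cons_append, List.cons.injEq] at e
          obtain ⟨rfl, rfl⟩ := e
          exact ⟨x :: y :: l1, l2, rfl, List.isChain_cons_cons.2 ⟨h1, h3⟩, by simpa using h4, h5⟩
      · right; right
        obtain ⟨l1, l2, e, h3, h4, h5⟩ := h2
        cases l1 with
        | nil => simp at h4
        | cons z l1 =>
          simp only [List.cons_append, List.cons.injEq] at e
          obtain ⟨rfl, rfl⟩ := e
          exact ⟨x :: y :: l1, l2, rfl, List.isChain_cons_cons.2 ⟨h1, h3⟩, by simpa using h4, h5⟩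
    · right; left
      exact ⟨[x], y :: l, rfl, by simp, by simp, by simp⟩
    · right; right
      exact ⟨[x], y :: l, rfl, by simp, by simp, by simp⟩

theorem fc_next {W : Type*} {T H : SimpleGraph W} (hT : T.IsAcyclic) {a b : W}
    (hH : ∀ x y, H.Adj x y → T.Adj x y ∨ (x = a ∧ y = b) ∨ (x = b ∧ y = a))
    {l1 l2 : List W} (hc : (l1 ++ l2).IsChain H.Adj) (hn : NBk (l1 ++ l2))
    (h1 : l1.getLast? = some a) (h2 : l2.head? = some b) :
    l2.IsChain T.Adj ∨ FC T a b l2 := by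
  rcases fc_cases hH l2 hc.right_of_append with h | h | h
  · exact Or.inl h
  · exact Or.inr h
  · exfalso
    obtain ⟨m1, m2, rfl, h3, h4, h5⟩ := h
    have hm1 : m1 ≠ [] := by rintro rfl; simp at h4
    have : m1 = [b] := by
      apply nb_unique hT h3 (by simp) hn.right.left (by intro i hi; simp at hi) hm1
      · rw [List.head?_append_of_ne_nil _ hm1] at h2; simp [h2]
      · simp [h4]
    subst this
    cases m2 with
    | nil => simp at h5
    | cons z m2 =>
      simp only [List.head?_cons, Option.some.injEq] at h5
      subst h5
      obtain ⟨l3, rfl⟩ := List.getLast?_eq_some_iff.1 h1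
      have := hn l3.length (by simp)
      simp at this

theorem fc_len {W : Type*} {T H : SimpleGraph W} (hT : T.IsAcyclic) {a b : W}
    (hH : ∀ x y, H.Adj x y → T.Adj x y ∨ (x = a ∧ y = b) ∨ (x = b ∧ y = a))
    {t : List W} (ht : t.IsChain T.Adj) (htn : NBk t) (htb : t.head? = some b) :
    ∀ (N : ℕ) (l : List W), l.length ≤ N → l.IsChain H.Adj → NBk l → l.getLast? = t.getLast? →
      FC T a b l → t.length < l.length := by
  intro N
  induction N with
  | zero =>
    rintro l hl - - - ⟨l1, l2, rfl, -, h4, -⟩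
    simp at hl; simp [hl.1] at h4
  | succ N ih =>
    rintro l hl hc hn hla ⟨l1, l2, rfl, h3, h4, h5⟩
    have hl1 : l1 ≠ [] := by rintro rfl; simp at h4
    have hl2 : l2 ≠ [] := by rintro rfl; simp at h5
    have hpos : 0 < l1.length := List.length_pos_of_ne_nil hl1
    rw [List.getLast?_append_of_ne_nil _ hl2] at hla
    simp only [List.length_append] at hl ⊢
    rcases fc_next hT hH hc hn h4 h5 with h | h
    · have := nb_unique hT h ht hn.right htn hl2 (by rw [h5, htb]) hla
      subst this; omega
    · have := ih l2 (by omega) hc.right_of_append hn.right hla h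
      omega

theorem fc_unique {W : Type*} {T H : SimpleGraph W} (hT : T.IsAcyclic) {a b : W}
    (hH : ∀ x y, H.Adj x y → T.Adj x y ∨ (x = a ∧ y = b) ∨ (x = b ∧ y = a)) :
    ∀ (N : ℕ) (l l' : List W), l.length ≤ N → l.IsChain H.Adj → NBk l → l'.IsChain H.Adj → NBk l' →
      l.length = l'.length → l.head? = l'.head? → l.getLast? = l'.getLast? →
      FC T a b l → FC T a b l' → l = l' := by
  intro N
  induction N with
  | zero =>
    rintro l l' hl - - - - - - - ⟨l1, l2, rfl, -, h4, -⟩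
    simp at hl; simp [hl.1] at h4
  | succ N ih =>
    rintro l l' hl hc hn hc' hn' hlen hhe hla ⟨l1, l2, rfl, h3, h4, h5⟩ ⟨m1, m2, rfl, h3', h4', h5'⟩
    have hl1 : l1 ≠ [] := by rintro rfl; simp at h4
    have hl2 : l2 ≠ [] := by rintro rfl; simp at h5
    have hm1 : m1 ≠ [] := by rintro rfl; simp at h4'
    have hm2 : m2 ≠ [] := by rintro rfl; simp at h5'
    have hpos : 0 < l1.length := List.length_pos_of_ne_nil hl1
    rw [List.getLast?_append_of_ne_nil _ hl2, List.getLast?_append_of_ne_nil _ hm2] at hla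
    rw [List.head?_append_of_ne_nil _ hl1, List.head?_append_of_ne_nil _ hm1] at hhe
    have e1 : l1 = m1 := nb_unique hT h3 h3' hn.left hn'.left hl1 hhe (by rw [h4, h4'])
    subst e1
    congr 1
    simp only [List.length_append] at hl hlen
    have hc2 := hc.right_of_append
    have hc2' := hc'.right_of_append
    rcases fc_next hT hH hc hn h4 h5 with h | h <;>
      rcases fc_next hT hH hc' hn' h4' h5' with h' | h'
    · exact nb_unique hT h h' hn.right hn'.right hl2 (by rw [h5, h5']) hla
    · have := fc_len hT hH h hn.right h5 _ m2 le_rfl hc2' hn'.right hla.symm h'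
      omega
    · have := fc_len hT hH h' hn'.right h5' _ l2 le_rfl hc2 hn.right hla h
      omega
    · exact ih l2 m2 (by omega) hc2 hn.right hc2' hn'.right (by omega) (by rw [h5, h5']) hla h h'

theorem card_three {W : Type*} {T H : SimpleGraph W} (hT : T.IsAcyclic) {a b : W}
    (hH : ∀ x y, H.Adj x y → T.Adj x y ∨ (x = a ∧ y = b) ∨ (x = b ∧ y = a))
    (Q : Finset (List W)) (u w : W) (ℓ : ℕ)
    (hQ : ∀ l ∈ Q, l.IsChain H.Adj ∧ NBk l ∧ l.length = ℓ + 1 ∧ l.head? = some u ∧ l.getLast? = some w) :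
    Q.card ≤ 3 := by
  have hH' : ∀ x y, H.Adj x y → T.Adj x y ∨ (x = b ∧ y = a) ∨ (x = a ∧ y = b) := by
    intro x y h; rcases hH x y h with h | h | h <;> tauto
  have hsub : Q ⊆ Q.filter (fun l => l.IsChain T.Adj) ∪ (Q.filter (FC T a b) ∪ Q.filter (FC T b a)) := by
    intro l hl
    have := fc_cases hH l (hQ l hl).1
    simp only [Finset.mem_union, Finset.mem_filter]
    tauto
  have c1 : (Q.filter (fun l => l.IsChain T.Adj)).card ≤ 1 := by
    rw [Finset.card_le_one]
    intro l hl l' hl'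
    rw [Finset.mem_filter] at hl hl'
    obtain ⟨a1, a2, a3, a4, a5⟩ := hQ l hl.1
    obtain ⟨b1, b2, b3, b4, b5⟩ := hQ l' hl'.1
    exact nb_unique hT hl.2 hl'.2 a2 b2 (by rintro rfl; simp at a3) (by rw [a4, b4]) (by rw [a5, b5])
  have c2 : (Q.filter (FC T a b)).card ≤ 1 := by
    rw [Finset.card_le_one]
    intro l hl l' hl'
    rw [Finset.mem_filter] at hl hl'
    obtain ⟨a1, a2, a3, a4, a5⟩ := hQ l hl.1
    obtain ⟨b1, b2, b3, b4, b5⟩ := hQ l' hl'.1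
    exact fc_unique hT hH _ l l' le_rfl a1 a2 b1 b2 (by rw [a3, b3]) (by rw [a4, b4]) (by rw [a5, b5]) hl.2 hl'.2
  have c3 : (Q.filter (FC T b a)).card ≤ 1 := by
    rw [Finset.card_le_one]
    intro l hl l' hl'
    rw [Finset.mem_filter] at hl hl'
    obtain ⟨a1, a2, a3, a4, a5⟩ := hQ l hl.1
    obtain ⟨b1, b2, b3, b4, b5⟩ := hQ l' hl'.1
    exact fc_unique hT hH' _ l l' le_rfl a1 a2 b1 b2 (by rw [a3, b3]) (by rw [a4, b4]) (by rw [a5, b5]) hl.2 hl'.2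
  have := Finset.card_le_card hsub
  have := Finset.card_union_le (Q.filter (fun l => l.IsChain T.Adj)) (Q.filter (FC T a b) ∪ Q.filter (FC T b a))
  have := Finset.card_union_le (Q.filter (FC T a b)) (Q.filter (FC T b a))
  omega

theorem ball_connected {V : Type*} [Fintype V] (G : SimpleGraph V) (r : ℕ) (u : V)
    (hu : u ∈ gBall G u r) :
    ∀ (k : ℕ), k ≤ r → ∀ (v : V) (p : G.Walk v u), p.length = k → ∃ hv : v ∈ gBall G u r,
      (G.induce (gBall G u r)).Reachable ⟨v, hv⟩ ⟨u, hu⟩ := by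
  intro k
  induction k with
  | zero =>
    intro _ v p hp
    have : v = u := SimpleGraph.Walk.eq_of_length_eq_zero hp
    subst this
    exact ⟨hu, SimpleGraph.Reachable.refl _⟩
  | succ k ih =>
    intro hk v p hp
    cases p with
    | nil => simp at hp
    | cons h q =>
      obtain ⟨hw, hr⟩ := ih (by omega) _ q (by simpa using hp)
      have hv : v ∈ gBall G u r := by
        refine ⟨(SimpleGraph.Walk.cons h q).reachable.symm, ?_⟩
        rw [SimpleGraph.dist_comm]
        exact (SimpleGraph.dist_le (SimpleGraph.Walk.cons h q)).trans (by omega)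
      refine ⟨hv, ?_⟩
      refine SimpleGraph.Reachable.trans (SimpleGraph.Adj.reachable ?_) hr
      simpa using h

theorem ball_tree {V : Type*} [Fintype V] (G : SimpleGraph V) (r : ℕ) (hbf : BicycleFree G r) (u : V) :
    ∃ (T : SimpleGraph (gBall G u r)) (a b : gBall G u r), T.IsAcyclic ∧
      ∀ x y, (G.induce (gBall G u r)).Adj x y → T.Adj x y ∨ (x = a ∧ y = b) ∨ (x = b ∧ y = a) := by
  have hu : u ∈ gBall G u r := ⟨SimpleGraph.Reachable.refl _, by simp⟩
  set B := gBall G u r with hB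
  set H := G.induce B with hH
  have hreach : ∀ v : B, H.Reachable v ⟨u, hu⟩ := by
    rintro ⟨v, hv⟩
    obtain ⟨p, hp⟩ := hv.1.symm.exists_walk_length_eq_dist
    obtain ⟨_, h⟩ := ball_connected G r u hu p.length (by rw [hp, SimpleGraph.dist_comm]; exact hv.2) v p rfl
    exact h
  have hconn : H.Connected := by
    have : Nonempty B := ⟨⟨u, hu⟩⟩
    exact SimpleGraph.Connected.mk (fun x y => (hreach x).trans (hreach y).symm)
  obtain ⟨T, hTH, hT⟩ := hconn.exists_isTree_le
  have hc1 := hT.card_edgeFinset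
  have hc2 : H.edgeFinset.card ≤ Fintype.card B := by
    have h1 := hbf u
    have h2 : H.edgeFinset.card ≤ (G.edgeSet ∩ {e : Sym2 V | ∀ x ∈ e, x ∈ gBall G u r}).ncard := by
      rw [Set.ncard_eq_toFinset_card']
      apply Finset.card_le_card_of_injOn (Sym2.map Subtype.val)
      · intro e he
        induction e with
        | _ x y =>
        simp [hH] at he
        simp [he]
      · exact (Sym2.map.injective Subtype.val_injective).injOn
    have h3 : (gBall G u r).ncard = Fintype.card B := by
      rw [← Nat.card_eq_fintype_card]; rfl
    omega
  have hsub : T.edgeFinset ⊆ H.edgeFinset := by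
    intro e he; simp only [SimpleGraph.mem_edgeFinset] at he ⊢
    exact SimpleGraph.edgeSet_mono hTH he
  have hc3 : (H.edgeFinset \ T.edgeFinset).card ≤ 1 := by
    rw [Finset.card_sdiff_of_subset hsub]; omega
  have : Nonempty (Sym2 B) := ⟨s(⟨u, hu⟩, ⟨u, hu⟩)⟩
  rw [Finset.card_le_one_iff_subset_singleton (α := Sym2 B)] at hc3
  obtain ⟨e, he⟩ : ∃ e, H.edgeFinset \ T.edgeFinset ⊆ {e} := hc3
  induction e with
  | _ a b =>
  refine ⟨T, a, b, hT.isAcyclic, fun x y hxy => ?_⟩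
  by_cases h : T.Adj x y
  · exact Or.inl h
  · right
    have := he (show s(x, y) ∈ H.edgeFinset \ T.edgeFinset from by simp [hxy, h])
    rw [Finset.mem_singleton, Sym2.eq_iff] at this
    exact this

theorem mem_ball_of_chain {V : Type*} (G : SimpleGraph V) (u : V) :
    ∀ (l : List V), (u :: l).IsChain G.Adj → ∀ x ∈ u :: l, ∃ p : G.Walk u x, p.length ≤ l.length := by
  intro l
  induction l generalizing u with
  | nil => intro _ x hx; simp at hx; subst hx; exact ⟨.nil, by simp⟩
  | cons y l ih =>
    intro h x hx
    rw [List.isChain_cons_cons] at h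
    rcases List.mem_cons.1 hx with rfl | hx
    · exact ⟨.nil, by simp⟩
    · obtain ⟨p, hp⟩ := ih y h.2 x hx
      exact ⟨.cons h.1 p, by simpa using hp⟩

theorem card_three_G {V : Type*} [Fintype V] (G : SimpleGraph V) (r : ℕ) (hbf : BicycleFree G r)
    (Q : Finset (List V)) (u w : V) (ℓ : ℕ) (hℓ : ℓ ≤ r)
    (hQ : ∀ l ∈ Q, l.IsChain G.Adj ∧ NBk l ∧ l.length = ℓ + 1 ∧ l.head? = some u ∧ l.getLast? = some w) :
    Q.card ≤ 3 := by
  rcases Q.eq_empty_or_nonempty with rfl | ⟨l0, hl0⟩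
  · simp
  obtain ⟨T, a, b, hT, hH⟩ := ball_tree G r hbf u
  have hmem : ∀ l ∈ Q, ∀ x ∈ l, x ∈ gBall G u r := by
    intro l hl x hx
    obtain ⟨h1, h2, h3, h4, h5⟩ := hQ l hl
    cases l with
    | nil => simp at hx
    | cons y l =>
      simp only [List.head?_cons, Option.some.injEq] at h4
      subst h4
      obtain ⟨p, hp⟩ := mem_ball_of_chain G y l h1 x hx
      refine ⟨p.reachable, (SimpleGraph.dist_le p).trans ?_⟩
      simp at h3; omega
  have hinj : Function.Injective (List.map (Subtype.val : gBall G u r → V)) :=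
    List.map_injective_iff.2 Subtype.val_injective
  set Q' : Finset (List (gBall G u r)) := Q.preimage (List.map Subtype.val) hinj.injOn with hQ'
  have hu : u ∈ gBall G u r := ⟨SimpleGraph.Reachable.refl _, by simp⟩
  have hw : w ∈ gBall G u r := hmem l0 hl0 w (List.mem_of_getLast? (hQ l0 hl0).2.2.2.2)
  have hle : Q ⊆ Q'.image (List.map Subtype.val) := by
    intro l hl
    have h1 := hmem l hl
    rw [Finset.mem_image]
    lift l to List (gBall G u r) using h1
    exact ⟨l, by simpa [hQ'] using hl, rfl⟩
  have := Finset.card_le_card hle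
  have := Finset.card_image_le (s := Q') (f := List.map Subtype.val)
  have : Q'.card ≤ 3 := by
    apply card_three hT hH Q' ⟨u, hu⟩ ⟨w, hw⟩ ℓ
    intro l hl
    rw [hQ', Finset.mem_preimage] at hl
    obtain ⟨h1, h2, h3, h4, h5⟩ := hQ _ hl
    refine ⟨?_, ?_, by simpa using h3, ?_, ?_⟩
    · rw [List.isChain_map] at h1
      exact h1
    · intro i hi
      have := h2 i (by simpa using hi)
      simp only [List.getElem_map] at this
      exact fun h => this (by rw [h])
    · rw [List.head?_map] at h4
      obtain ⟨z, hz, hz'⟩ := Option.map_eq_some_iff.1 h4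
      rw [hz]; congr 1; exact Subtype.ext hz'
    · rw [List.getLast?_map] at h5
      obtain ⟨z, hz, hz'⟩ := Option.map_eq_some_iff.1 h5
      rw [hz]; congr 1; exact Subtype.ext hz'
  omega

def nbr {V : Type*} [Fintype V] (S : Finset (Sym2 V)) (y : V) : Finset V :=
  Finset.univ.filter (fun z => s(y, z) ∈ S)

def vs {V : Type*} [Fintype V] (S : Finset (Sym2 V)) : Finset V :=
  Finset.univ.filter (fun x => ∃ y, s(x, y) ∈ S)

theorem mem_nbr {V : Type*} [Fintype V] {S : Finset (Sym2 V)} {y z : V} :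
    z ∈ nbr S y ↔ s(y, z) ∈ S := by simp [nbr]

theorem mem_nbr_comm {V : Type*} [Fintype V] {S : Finset (Sym2 V)} {y z : V} :
    z ∈ nbr S y ↔ y ∈ nbr S z := by rw [mem_nbr, mem_nbr, Sym2.eq_swap]

theorem mem_vs {V : Type*} [Fintype V] {S : Finset (Sym2 V)} {x : V} :
    x ∈ vs S ↔ ∃ y, s(x, y) ∈ S := by simp [vs]

theorem sum_nbr {V : Type*} [Fintype V] (G : SimpleGraph V) {S : Finset (Sym2 V)}
    (hS : ∀ e ∈ S, e ∈ G.edgeSet) : ∑ y, (nbr S y).card = 2 * S.card := by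
  have h := (SimpleGraph.fromEdgeSet (S : Set (Sym2 V))).sum_degrees_eq_twice_card_edges
  have hd : ∀ x y, s(x, y) ∈ S → x ≠ y := fun x y hxy => (hS _ hxy : G.Adj x y).ne
  convert h using 3
  · rename_i y _
    rw [← SimpleGraph.card_neighborFinset_eq_degree]
    congr 1
    ext z
    simp only [mem_nbr, SimpleGraph.mem_neighborFinset, SimpleGraph.fromEdgeSet_adj, Finset.mem_coe]
    exact ⟨fun h => ⟨h, hd _ _ h⟩, fun h => h.1⟩
  · ext e
    simp only [SimpleGraph.mem_edgeFinset, SimpleGraph.edgeSet_fromEdgeSet]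
    constructor
    · intro he
      exact ⟨he, fun h => G.not_isDiag_of_mem_edgeSet (hS e he) h⟩
    · exact fun h => h.1

def LL {V : Type*} [Fintype V] (S : Finset (Sym2 V)) : ℕ → V → V → Finset (List V)
  | 0, x, y => {[x, y]}
  | ℓ + 1, x, y => ((nbr S y).erase x).biUnion (fun z => (LL S ℓ y z).image (List.cons x))

theorem LL_mem {V : Type*} [Fintype V] {S : Finset (Sym2 V)} :
    ∀ (ℓ : ℕ) (x y : V), s(x, y) ∈ S → ∀ l ∈ LL S ℓ x y,
      (∃ l', l = x :: y :: l') ∧ l.IsChain (fun a b => s(a, b) ∈ S) ∧ NBk l ∧ l.length = ℓ + 2 := by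
  intro ℓ
  induction ℓ with
  | zero =>
    intro x y h l hl
    simp only [LL, Finset.mem_singleton] at hl
    subst hl
    exact ⟨⟨[], rfl⟩, by simpa using h, by intro i hi; simp at hi, rfl⟩
  | succ ℓ ih =>
    intro x y h l hl
    simp only [LL, Finset.mem_biUnion, Finset.mem_image, Finset.mem_erase, mem_nbr] at hl
    obtain ⟨z, ⟨hzx, hz⟩, l', hl', rfl⟩ := hl
    obtain ⟨⟨l'', rfl⟩, h2, h3, h4⟩ := ih y z hz l' hl'
    refine ⟨⟨_, rfl⟩, List.isChain_cons_cons.2 ⟨h, h2⟩, ?_, by simpa using h4⟩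
    intro i hi
    cases i with
    | zero => simpa using hzx.symm
    | succ i => exact h3 i (by simp only [List.length_cons] at hi ⊢; omega)

theorem LL_card {V : Type*} [Fintype V] {S : Finset (Sym2 V)} (ℓ : ℕ) (x y : V) :
    (LL S (ℓ + 1) x y).card = ∑ z ∈ (nbr S y).erase x, (LL S ℓ y z).card := by
  rw [LL, Finset.card_biUnion]
  · apply Finset.sum_congr rfl
    intro z _
    exact Finset.card_image_of_injective _ (List.cons_injective)
  · intro z hz z' hz' hne
    replace hz := Finset.mem_erase.1 hz
    replace hz' := Finset.mem_erase.1 hz'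
    rw [mem_nbr] at hz hz'
    rw [Function.onFun, Finset.disjoint_left]
    intro l hl hl'
    simp only [Finset.mem_image] at hl hl'
    obtain ⟨m, hm, rfl⟩ := hl
    obtain ⟨m', hm', e⟩ := hl'
    obtain ⟨⟨a, rfl⟩, -⟩ := LL_mem ℓ y z hz.2 m hm
    obtain ⟨⟨b, rfl⟩, -⟩ := LL_mem ℓ y z' hz'.2 m' hm'
    simp at e
    exact hne e.1.symm

theorem jensen_log {V : Type*} (s : Finset V) (hs : s.Nonempty) (a : V → ℕ) (ha : ∀ z ∈ s, 1 ≤ a z) :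
    Real.log s.card + (1 / (s.card : ℝ)) * ∑ z ∈ s, Real.log (a z) ≤ Real.log ((∑ z ∈ s, a z : ℕ) : ℝ) := by
  have hc : (0 : ℝ) < s.card := by exact_mod_cast hs.card_pos
  have h := strictConcaveOn_log_Ioi.concaveOn.le_map_sum (t := s) (w := fun _ => 1 / (s.card : ℝ))
    (p := fun z => (a z : ℝ)) (by intro i _; positivity) (by simp; field_simp)
    (by intro i hi; have := ha i hi; simp only [Set.mem_Ioi]; exact_mod_cast this)
  simp only [smul_eq_mul] at h
  rw [← Finset.mul_sum, ← Finset.mul_sum, one_div, Real.log_mul (by positivity) ?_, Real.log_inv] at h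
  · push_cast; rw [one_div]; linarith
  · have : (1 : ℝ) ≤ ∑ z ∈ s, (a z : ℝ) := by
      obtain ⟨z, hz⟩ := hs
      have h1 : (1 : ℝ) ≤ a z := by exact_mod_cast ha z hz
      exact h1.trans (Finset.single_le_sum (f := fun z => (a z : ℝ)) (by intro i _; positivity) hz)
    linarith

theorem LL_pos {V : Type*} [Fintype V] {S : Finset (Sym2 V)} (hdeg : ∀ x ∈ vs S, 2 ≤ (nbr S x).card) :
    ∀ (ℓ : ℕ) (x y : V), s(x, y) ∈ S → 1 ≤ (LL S ℓ x y).card := by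
  intro ℓ
  induction ℓ with
  | zero => intro x y _; simp [LL]
  | succ ℓ ih =>
    intro x y h
    rw [LL_card]
    have h1 : x ∈ nbr S y := by rw [mem_nbr, Sym2.eq_swap]; exact h
    have h2 := hdeg y (mem_vs.2 ⟨x, by rw [Sym2.eq_swap]; exact h⟩)
    have : ((nbr S y).erase x).Nonempty := by
      rw [← Finset.card_pos, Finset.card_erase_of_mem h1]; omega
    obtain ⟨z, hz⟩ := this
    have h3 := ih y z (by simpa [mem_nbr] using (Finset.mem_erase.1 hz).2)
    exact h3.trans (Finset.single_le_sum (f := fun z => (LL S ℓ y z).card) (by intro i _; positivity) hz)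

theorem moore_aux {V : Type*} [Fintype V] {S : Finset (Sym2 V)}
    (hdeg : ∀ x ∈ vs S, 2 ≤ (nbr S x).card) :
    ∀ ℓ : ℕ, (ℓ : ℝ) * ∑ y, ((nbr S y).card : ℝ) * Real.log ((nbr S y).card - 1) ≤
      ∑ y, ∑ x ∈ nbr S y, Real.log (LL S ℓ x y).card := by
  intro ℓ
  induction ℓ with
  | zero => simp [LL]
  | succ ℓ ih =>
    have swap : ∑ y, ∑ x ∈ nbr S y, Real.log (LL S ℓ x y).card =
        ∑ y, ∑ z ∈ nbr S y, Real.log (LL S ℓ y z).card := by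
      apply Finset.sum_comm'
      intro x y
      simp only [Finset.mem_univ, true_and, and_true]
      exact mem_nbr_comm
    rw [swap] at ih
    have main : ∀ y, ((nbr S y).card : ℝ) * Real.log ((nbr S y).card - 1) +
        ∑ z ∈ nbr S y, Real.log (LL S ℓ y z).card ≤ ∑ x ∈ nbr S y, Real.log (LL S (ℓ + 1) x y).card := by
      intro y
      rcases (nbr S y).eq_empty_or_nonempty with he | ⟨x0, hx0⟩
      · rw [he]; simp
      have hd := hdeg y (mem_vs.2 ⟨x0, mem_nbr.1 hx0⟩)
      have hd' : (2 : ℝ) ≤ (nbr S y).card := by exact_mod_cast hd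
      have step : ∀ x ∈ nbr S y, Real.log ((nbr S y).card - 1) + (1 / ((nbr S y).card - 1 : ℝ)) *
          ((∑ z ∈ nbr S y, Real.log (LL S ℓ y z).card) - Real.log (LL S ℓ y x).card) ≤
          Real.log (LL S (ℓ + 1) x y).card := by
        intro x hx
        have hce : ((nbr S y).erase x).card = (nbr S y).card - 1 := Finset.card_erase_of_mem hx
        have h := jensen_log ((nbr S y).erase x) (by rw [← Finset.card_pos]; omega)
          (fun z => (LL S ℓ y z).card)
          (fun z hz => LL_pos hdeg ℓ y z (mem_nbr.1 (Finset.mem_erase.1 hz).2))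
        rw [LL_card]
        rw [hce, Nat.cast_sub (by omega), Finset.sum_erase_eq_sub hx] at h
        simpa using h
      have h := Finset.sum_le_sum step
      rw [Finset.sum_add_distrib, ← Finset.mul_sum, Finset.sum_sub_distrib] at h
      simp only [Finset.sum_const, nsmul_eq_mul] at h
      refine le_trans (le_of_eq ?_) h
      have : ((nbr S y).card - 1 : ℝ) ≠ 0 := by linarith
      field_simp
    have h := Finset.sum_le_sum (fun y (_ : y ∈ Finset.univ) => main y)
    rw [Finset.sum_add_distrib] at h
    push_cast
    linarith

theorem LL_le {V : Type*} [Fintype V] (G : SimpleGraph V) (r : ℕ) (hbf : BicycleFree G r)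
    {S : Finset (Sym2 V)} (hS : ∀ e ∈ S, e ∈ G.edgeSet) (ℓ : ℕ) (hℓ : ℓ + 1 ≤ r) (x y : V)
    (h : s(x, y) ∈ S) : (LL S ℓ x y).card ≤ (vs S).card * 3 := by
  have hsub : LL S ℓ x y ⊆ (vs S).biUnion (fun w => (LL S ℓ x y).filter (fun l => l.getLast? = some w)) := by
    intro l hl
    obtain ⟨⟨l', rfl⟩, h2, h3, h4⟩ := LL_mem ℓ x y h l hl
    simp only [Finset.mem_biUnion, Finset.mem_filter]
    have hne : x :: y :: l' ≠ [] := by simp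
    refine ⟨(x :: y :: l').getLast hne, ?_, hl, List.getLast?_eq_some_getLast hne⟩
    have : ∀ (l : List V) (x y : V), (x :: y :: l).IsChain (fun a b => s(a, b) ∈ S) →
        (x :: y :: l).getLast (by simp) ∈ vs S := by
      intro l
      induction l with
      | nil => intro x y h; simp at h; simp; exact mem_vs.2 ⟨x, by rw [Sym2.eq_swap]; exact h⟩
      | cons z l ih => 
        intro x y h
        have := ih y z h.tail
        rw [List.getLast_cons (by simp)]
        exact this
    exact this l' x y h2
  refine (Finset.card_le_card hsub).trans (Finset.card_biUnion_le_card_mul _ _ _ ?_)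
  intro w _
  apply card_three_G G r hbf _ x w (ℓ + 1) hℓ
  intro l hl
  rw [Finset.mem_filter] at hl
  obtain ⟨⟨l', rfl⟩, h2, h3, h4⟩ := LL_mem ℓ x y h l hl.1
  exact ⟨h2.imp (fun a b hab => hS _ hab), h3, h4, rfl, hl.2⟩

theorem moore_core {V : Type*} [Fintype V] (G : SimpleGraph V) (r : ℕ) (hr : 2 ≤ r) (hbf : BicycleFree G r)
    {S : Finset (Sym2 V)} (hS : ∀ e ∈ S, e ∈ G.edgeSet)
    (hdeg : ∀ x ∈ vs S, 2 ≤ (nbr S x).card) :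
    ((S.card : ℝ) - (vs S).card) ≤ S.card * Real.log (3 * (vs S).card) / (2 * (r - 1)) := by
  have h1 := moore_aux hdeg (r - 1)
  have hr' : (2 : ℝ) ≤ r := by exact_mod_cast hr
  rw [Nat.cast_sub (by omega)] at h1
  have hsum : ∑ y, ((nbr S y).card : ℝ) = 2 * S.card := by exact_mod_cast sum_nbr G hS
  have h2 : ∑ y, ∑ x ∈ nbr S y, Real.log (LL S (r - 1) x y).card ≤ 2 * S.card * Real.log (3 * (vs S).card) := by
    rw [← hsum, Finset.sum_mul]
    apply Finset.sum_le_sum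
    intro y _
    rw [← nsmul_eq_mul]
    apply Finset.sum_le_card_nsmul
    intro x hx
    have hx' : s(x, y) ∈ S := by rw [Sym2.eq_swap]; exact mem_nbr.1 hx
    apply Real.log_le_log
    · exact_mod_cast LL_pos hdeg _ x y hx'
    · have := LL_le G r hbf hS (r - 1) (by omega) x y hx'
      rw [mul_comm]; exact_mod_cast this
  have h3 : 4 * (S.card : ℝ) - 4 * (vs S).card ≤ ∑ y, ((nbr S y).card : ℝ) * Real.log ((nbr S y).card - 1) := by
    have h4 : ∀ y, 2 * ((nbr S y).card : ℝ) - (if y ∈ vs S then 4 else 0) ≤ ((nbr S y).card : ℝ) * Real.log ((nbr S y).card - 1) := by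
      intro y
      split_ifs with hy
      · have hd : (2 : ℝ) ≤ (nbr S y).card := by exact_mod_cast hdeg y hy
        have := Real.le_log_one_add_of_nonneg (x := (nbr S y).card - 2) (by linarith)
        rw [show (1 : ℝ) + ((nbr S y).card - 2) = (nbr S y).card - 1 by ring,
          show ((nbr S y).card : ℝ) - 2 + 2 = (nbr S y).card by ring] at this
        have := mul_le_mul_of_nonneg_left this (by linarith : (0 : ℝ) ≤ (nbr S y).card)
        refine le_trans (le_of_eq ?_) this
        field_simp; ring
      · have : nbr S y = ∅ := by
          rw [Finset.eq_empty_iff_forall_notMem]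
          intro z hz; exact hy (mem_vs.2 ⟨z, mem_nbr.1 hz⟩)
        rw [this]; simp
    have h5 := Finset.sum_le_sum (fun y (_ : y ∈ Finset.univ) => h4 y)
    rw [Finset.sum_sub_distrib, ← Finset.mul_sum, hsum] at h5
    simp only [Finset.sum_ite_mem, Finset.univ_inter, Finset.sum_const, nsmul_eq_mul] at h5
    linarith
  have h6 : ((r : ℝ) - 1) * (4 * (S.card : ℝ) - 4 * (vs S).card) ≤ 2 * S.card * Real.log (3 * (vs S).card) := by
    refine (mul_le_mul_of_nonneg_left h3 (by linarith)).trans ?_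
    refine le_trans ?_ h2
    simpa using h1
  rw [le_div_iff₀ (by linarith)]
  linarith

theorem prune {V : Type*} [Fintype V] : ∀ (N : ℕ) (S : Finset (Sym2 V)), S.card = N →
    ∃ S' ⊆ S, (∀ x ∈ vs S', 2 ≤ (nbr S' x).card) ∧ S.card + (vs S').card ≤ S'.card + (vs S).card := by
  intro N
  induction N with
  | zero =>
    intro S hS
    refine ⟨S, le_rfl, ?_, by omega⟩
    intro x hx
    rw [Finset.card_eq_zero] at hS
    subst hS; simp [vs] at hx
  | succ N ih =>
    intro S hS
    by_cases h : ∀ x ∈ vs S, 2 ≤ (nbr S x).card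
    · exact ⟨S, le_rfl, h, by omega⟩
    push Not at h
    obtain ⟨x, hx, hlt⟩ := h
    obtain ⟨y, hy⟩ := mem_vs.1 hx
    have hc : (S.erase s(x, y)).card = N := by rw [Finset.card_erase_of_mem hy]; omega
    obtain ⟨S', h1, h2, h3⟩ := ih _ hc
    refine ⟨S', h1.trans (Finset.erase_subset _ _), h2, ?_⟩
    have : (vs (S.erase s(x, y))) ⊆ (vs S).erase x := by
      intro z hz
      obtain ⟨w, hw⟩ := mem_vs.1 hz
      rw [Finset.mem_erase] at hw ⊢
      refine ⟨?_, mem_vs.2 ⟨w, hw.2⟩⟩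
      rintro rfl
      apply hw.1
      have : w = y := Finset.card_le_one.1 (by omega) w (mem_nbr.2 hw.2) y (mem_nbr.2 hy)
      rw [this]
    have := Finset.card_le_card this
    rw [Finset.card_erase_of_mem hx] at this
    have : 0 < (vs S).card := Finset.card_pos.2 ⟨x, hx⟩
    omega

theorem moore {V : Type*} [Fintype V] (G : SimpleGraph V) (r : ℕ) (hr : 2 ≤ r) (hbf : BicycleFree G r)
    {S : Finset (Sym2 V)} (hS : ∀ e ∈ S, e ∈ G.edgeSet) (hne : 1 ≤ (vs S).card) :
    ((S.card : ℝ) - (vs S).card) ≤ S.card * Real.log (3 * (vs S).card) / (2 * (r - 1)) := by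
  obtain ⟨S', h1, h2, h3⟩ := prune S.card S rfl
  have h4 := moore_core G r hr hbf (fun e he => hS e (h1 he)) h2
  have hr' : (2 : ℝ) ≤ r := by exact_mod_cast hr
  have hne' : (1 : ℝ) ≤ (vs S).card := by exact_mod_cast hne
  have h3' : (S.card : ℝ) + (vs S').card ≤ S'.card + (vs S).card := by exact_mod_cast h3
  have hvs : vs S' ⊆ vs S := by
    intro x hx; obtain ⟨y, hy⟩ := mem_vs.1 hx; exact mem_vs.2 ⟨y, h1 hy⟩
  have hc1 : (S'.card : ℝ) ≤ S.card := by exact_mod_cast Finset.card_le_card h1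
  have hc2 : ((vs S').card : ℝ) ≤ (vs S).card := by exact_mod_cast Finset.card_le_card hvs
  have hlog : 0 ≤ Real.log (3 * (vs S).card) := Real.log_nonneg (by linarith)
  have h5 : S'.card * Real.log (3 * (vs S').card) ≤ S.card * Real.log (3 * (vs S).card) := by
    rcases Nat.eq_zero_or_pos (vs S').card with h0 | h0
    · rw [h0]; simp; positivity
    · apply mul_le_mul hc1 _ _ (by positivity)
      · apply Real.log_le_log (by positivity); linarith
      · apply Real.log_nonneg
        have : (1 : ℝ) ≤ (vs S').card := by exact_mod_cast h0
        linarith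
  have h6 := div_le_div_of_nonneg_right h5 (by linarith : (0 : ℝ) ≤ 2 * (r - 1))
  linarith

def opts {V : Type*} [Fintype V] (G : SimpleGraph V) (x : V) (K : Finset (Sym2 V)) : Finset V :=
  (G.neighborFinset x).filter (fun y => s(x, y) ∉ K)

def FF {V : Type*} [Fintype V] (G : SimpleGraph V) :
    ℕ → ℕ → ℕ → List V → Finset (Sym2 V) → Bool → Finset (Finset (Sym2 V))
  | 0, _, _, [], K, _ => {K}
  | 0, _, _, _ :: _, _, _ => ∅
  | _ + 1, _, _, [], K, _ => {K}
  | N + 1, t, b, x :: l, K, true =>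
      (if b = 0 then ∅ else FF G N t (b - 1) l K false) ∪
      (if t = 0 then ∅ else (opts G x K).biUnion (fun y =>
        if y ∈ vs K then FF G N (t - 1) b (x :: l) (insert s(x, y) K) false
        else FF G N (t - 1) b (y :: x :: l) (insert s(x, y) K) true))
  | N + 1, t, b, x :: l, K, false =>
      (FF G N t b l K false) ∪
      (if t = 0 then ∅ else if b = 0 then ∅ else (opts G x K).biUnion (fun y =>
        if y ∈ vs K then FF G N (t - 1) (b - 1) (x :: l) (insert s(x, y) K) false
        else FF G N (t - 1) (b - 1) (y :: x :: l) (insert s(x, y) K) true))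

theorem vs_insert {V : Type*} [Fintype V] (K : Finset (Sym2 V)) (x y : V) :
    vs (insert s(x, y) K) = insert x (insert y (vs K)) := by
  ext v
  simp only [mem_vs, Finset.mem_insert, Sym2.eq_iff]
  constructor
  · rintro ⟨w, (⟨h, -⟩ | ⟨h, -⟩) | h⟩
    · exact Or.inl h
    · exact Or.inr (Or.inl h)
    · exact Or.inr (Or.inr ⟨w, h⟩)
  · rintro (h | h | ⟨w, h⟩)
    · exact ⟨y, Or.inl (Or.inl ⟨h, rfl⟩)⟩
    · exact ⟨x, Or.inl (Or.inr ⟨h, rfl⟩)⟩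
    · exact ⟨w, Or.inr h⟩

theorem opts_card {V : Type*} [Fintype V] (G : SimpleGraph V) {d : ℕ} (hreg : ∀ v, (G.neighborFinset v).card = d)
    (x : V) (K : Finset (Sym2 V)) (hK : ∀ e ∈ K, e ∈ G.edgeSet) (hx : x ∈ vs K) :
    (opts G x K).card ≤ d - 1 := by
  obtain ⟨y, hy⟩ := mem_vs.1 hx
  have hyn : y ∈ G.neighborFinset x := by simpa using hK _ hy
  have : opts G x K ⊆ (G.neighborFinset x).erase y := by
    intro z hz
    rw [opts, Finset.mem_filter] at hz
    rw [Finset.mem_erase]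
    exact ⟨fun h => hz.2 (h ▸ hy), hz.1⟩
  have := Finset.card_le_card this
  rwa [Finset.card_erase_of_mem hyn, hreg] at this

theorem FF_card {V : Type*} [Fintype V] (G : SimpleGraph V) {d : ℕ} (hd : 2 ≤ d)
    (hreg : ∀ v, (G.neighborFinset v).card = d) (X : ℝ) (hX : 1 ≤ X) :
    ∀ (N t b : ℕ) (l : List V) (K : Finset (Sym2 V)) (fl : Bool), (∀ e ∈ K, e ∈ G.edgeSet) →
      (∀ v ∈ l, v ∈ vs K) →
      ((FF G N t b l K fl).card : ℝ) ≤ ((d : ℝ) - 1) ^ t * X ^ b * (1 + 1 / X) ^ N := by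
  have hd' : (1 : ℝ) ≤ (d : ℝ) - 1 := by
    have : (2 : ℝ) ≤ d := by exact_mod_cast hd
    linarith
  have hX0 : 0 < X := by linarith
  have hone : ∀ N t b : ℕ, (1 : ℝ) ≤ ((d : ℝ) - 1) ^ t * X ^ b * (1 + 1 / X) ^ N := by
    intro N t b
    have h1 := one_le_pow₀ hd' (n := t)
    have h2 := one_le_pow₀ hX (n := b)
    have h3 : (1 : ℝ) ≤ (1 + 1 / X) ^ N := one_le_pow₀ (by have : 0 < 1 / X := by positivity
                                                           linarith)
    calc (1 : ℝ) = 1 * 1 * 1 := by norm_num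
      _ ≤ _ := by gcongr
  intro N
  induction N with
  | zero =>
    intro t b l K fl _ _
    cases l with
    | nil => simp only [FF, Finset.card_singleton, Nat.cast_one]; exact hone 0 t b
    | cons x l => simp only [FF, Finset.card_empty, Nat.cast_zero]; linarith [hone 0 t b]
  | succ N ih =>
    intro t b l K fl hK hl
    cases l with
    | nil => simp only [FF, Finset.card_singleton, Nat.cast_one]; exact hone (N + 1) t b
    | cons x l =>
      have expl : ∀ t' b' : ℕ, ((((opts G x K).biUnion (fun y =>
        if y ∈ vs K then FF G N t' b' (x :: l) (insert s(x, y) K) false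
        else FF G N t' b' (y :: x :: l) (insert s(x, y) K) true)).card : ℕ) : ℝ) ≤
          ((d : ℝ) - 1) ^ (t' + 1) * X ^ b' * (1 + 1 / X) ^ N := by
        intro t' b'
        have h1 : ∀ y ∈ opts G x K, (((if y ∈ vs K then FF G N t' b' (x :: l) (insert s(x, y) K) false
          else FF G N t' b' (y :: x :: l) (insert s(x, y) K) true).card : ℕ) : ℝ) ≤
            ((d : ℝ) - 1) ^ t' * X ^ b' * (1 + 1 / X) ^ N := by
          intro y hy
          rw [opts, Finset.mem_filter, SimpleGraph.mem_neighborFinset] at hy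
          have hK' : ∀ e ∈ insert s(x, y) K, e ∈ G.edgeSet := by
            intro e he
            rcases Finset.mem_insert.1 he with rfl | he
            · exact hy.1
            · exact hK e he
          split_ifs with hyv
          · apply ih _ _ _ _ _ hK'
            intro v hv
            rw [vs_insert]
            simp [hl v hv]
          · apply ih _ _ _ _ _ hK'
            intro v hv
            rw [vs_insert]
            rcases List.mem_cons.1 hv with rfl | hv
            · simp
            · simp [hl v hv]
        have h2 := opts_card G hreg x K hK (hl x (by simp))
        have h2' : ((opts G x K).card : ℝ) ≤ (d : ℝ) - 1 := by
          have : ((opts G x K).card : ℝ) ≤ ((d - 1 : ℕ) : ℝ) := by exact_mod_cast h2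
          rwa [Nat.cast_sub (by omega), Nat.cast_one] at this
        calc _ ≤ (((∑ y ∈ opts G x K, (if y ∈ vs K then FF G N t' b' (x :: l) (insert s(x, y) K) false
          else FF G N t' b' (y :: x :: l) (insert s(x, y) K) true).card : ℕ)) : ℝ) := by
              exact_mod_cast Finset.card_biUnion_le
          _ ≤ (opts G x K).card * (((d : ℝ) - 1) ^ t' * X ^ b' * (1 + 1 / X) ^ N) := by
              push_cast
              rw [← nsmul_eq_mul]
              exact Finset.sum_le_card_nsmul _ _ _ h1
          _ ≤ ((d : ℝ) - 1) * (((d : ℝ) - 1) ^ t' * X ^ b' * (1 + 1 / X) ^ N) := by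
              apply mul_le_mul_of_nonneg_right h2'
              linarith [hone N t' b']
          _ = _ := by ring
      have hpos : 0 ≤ ((d : ℝ) - 1) ^ t * X ^ b * (1 + 1 / X) ^ N := by linarith [hone N t b]
      have hsplit : ((d : ℝ) - 1) ^ t * X ^ b * (1 + 1 / X) ^ (N + 1) =
          ((d : ℝ) - 1) ^ t * X ^ b * (1 + 1 / X) ^ N + 
          ((d : ℝ) - 1) ^ t * X ^ b * (1 + 1 / X) ^ N / X := by
        rw [pow_succ]; field_simp
      have hpop := fun b' => ih t b' l K false hK (fun v hv => hl v (by simp [hv]))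
      have hbX : ∀ b', b = b' + 1 → ((d : ℝ) - 1) ^ t * X ^ b' * (1 + 1 / X) ^ N = 
          ((d : ℝ) - 1) ^ t * X ^ b * (1 + 1 / X) ^ N / X := by
        rintro b' rfl
        rw [pow_succ]; field_simp
      rw [hsplit]
      cases fl with
      | true =>
        simp only [FF]
        refine (Nat.cast_le.2 (Finset.card_union_le _ _)).trans ?_
        push_cast
        rw [add_comm]
        apply add_le_add
        · split_ifs with h
          · simpa using hpos
          · obtain ⟨t', rfl⟩ := Nat.exists_eq_succ_of_ne_zero h
            exact expl t' b
        · split_ifs with h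
          · simp; positivity
          · obtain ⟨b', rfl⟩ := Nat.exists_eq_succ_of_ne_zero h
            rw [← hbX b' rfl]
            exact hpop b'
      | false =>
        simp only [FF]
        refine (Nat.cast_le.2 (Finset.card_union_le _ _)).trans ?_
        push_cast
        apply add_le_add
        · exact hpop b
        · split_ifs with h h'
          · simp; positivity
          · simp; positivity
          · obtain ⟨t', rfl⟩ := Nat.exists_eq_succ_of_ne_zero h
            obtain ⟨b', rfl⟩ := Nat.exists_eq_succ_of_ne_zero h'
            rw [← hbX b' rfl]
            exact expl t' b'

theorem card_sdiff_ins {α : Type*} [DecidableEq α] {S K : Finset α} {a : α} (h : a ∈ S) (hK : a ∉ K) :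
    (S \ insert a K).card + 1 = (S \ K).card := by
  rw [Finset.sdiff_insert, Finset.card_erase_of_mem (Finset.mem_sdiff.2 ⟨h, hK⟩)]
  have : 0 < (S \ K).card := Finset.card_pos.2 ⟨a, Finset.mem_sdiff.2 ⟨h, hK⟩⟩
  omega

set_option maxHeartbeats 1000000 in
theorem FF_mem {V : Type*} [Fintype V] (G : SimpleGraph V) (S : Finset (Sym2 V)) (v0 z : V)
    (hS : ∀ e ∈ S, e ∈ G.edgeSet)
    (hconn : ∀ K ⊆ S, v0 ∈ vs K → K ≠ S → ∃ x y, s(x, y) ∈ S ∧ s(x, y) ∉ K ∧ x ∈ vs K)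
    (hdeg : ∀ v ∈ vs S, v ≠ z → v ≠ v0 → 2 ≤ (nbr S v).card) :
    ∀ (N t : ℕ) (l : List V) (K : Finset (Sym2 V)) (fl : Bool), K ⊆ S → v0 ∈ vs K →
      (∀ v ∈ l, v ∈ vs K) → (∀ v ∈ vs K, v ∉ l → ∀ y, s(v, y) ∈ S → s(v, y) ∈ K) →
      (fl = true → ∃ x l', l = x :: l' ∧ (nbr K x).card ≤ 1 ∧ x ≠ v0) →
      (S \ K).card + (vs S \ vs K).card + l.length ≤ N → (S \ K).card ≤ t →
      ∃ b0, b0 + (vs S \ vs K).card + fl.toNat ≤ (S \ K).card +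
          2 * (if z ∉ vs K ∨ (fl = true ∧ l.head? = some z) then 1 else 0) ∧
        ∀ b, b0 ≤ b → S ∈ FF G N t b l K fl := by
  have hnil : ∀ (K : Finset (Sym2 V)), K ⊆ S → v0 ∈ vs K →
      (∀ v ∈ vs K, v ∉ ([] : List V) → ∀ y, s(v, y) ∈ S → s(v, y) ∈ K) → K = S := by
    intro K hKS h0 hcl
    by_contra hne
    obtain ⟨x, y, h1, h2, h3⟩ := hconn K hKS h0 hne
    exact h2 (hcl x h3 (by simp) y h1)
  intro N
  induction N with
  | zero =>
    intro t l K fl hKS h0 hl hcl hfl hN ht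
    have : l = [] := by
      rw [← List.length_eq_zero_iff]; omega
    subst this
    have := hnil K hKS h0 hcl
    subst this
    have : fl = false := by
      by_contra h; simp at h; obtain ⟨x, l', h, -⟩ := hfl h; simp at h
    subst this
    exact ⟨0, by simp, by intro b _; simp [FF]⟩
  | succ N ih =>
    intro t l K fl hKS h0 hl hcl hfl hN ht
    cases l with
    | nil =>
      have := hnil K hKS h0 hcl
      subst this
      have : fl = false := by
        by_contra h; simp at h; obtain ⟨x, l', h, -⟩ := hfl h; simp at h
      subst this
      exact ⟨0, by simp, by intro b _; simp [FF]⟩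
    | cons x l =>
      have hx : x ∈ vs K := hl x (by simp)
      by_cases hex : ∃ y, s(x, y) ∈ S ∧ s(x, y) ∉ K
      · obtain ⟨y, hyS, hyK⟩ := hex
        have hopt : y ∈ opts G x K := by
          rw [opts, Finset.mem_filter, SimpleGraph.mem_neighborFinset]
          exact ⟨hS _ hyS, hyK⟩
        have hKS' : insert s(x, y) K ⊆ S := Finset.insert_subset hyS hKS
        have hc1 : (S \ insert s(x, y) K).card + 1 = (S \ K).card := by
          exact card_sdiff_ins hyS hyK
        have h0' : v0 ∈ vs (insert s(x, y) K) := by rw [vs_insert]; simp [h0]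
        by_cases hyv : y ∈ vs K
        · have hvs : vs (insert s(x, y) K) = vs K := by
            rw [vs_insert, Finset.insert_eq_of_mem hyv, Finset.insert_eq_of_mem hx]
          obtain ⟨b0, hb0, hmem⟩ := ih (t - 1) (x :: l) (insert s(x, y) K) false hKS' h0'
            (by rw [hvs]; exact hl)
            (by
              rw [hvs]; intro v hv hvl w hw
              exact Finset.mem_insert_of_mem (hcl v hv hvl w hw))
            (by simp) (by rw [hvs]; omega) (by omega)
          rw [hvs] at hb0
          have hz : (if z ∉ vs K ∨ (false = true ∧ (x :: l).head? = some z) then 1 else 0) ≤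
            (if z ∉ vs K ∨ (fl = true ∧ (x :: l).head? = some z) then 1 else 0) := by
            by_cases hzK : z ∈ vs K
            · simp [hzK]
            · simp [hzK]
          cases fl with
          | true =>
            refine ⟨b0, by simp only [Bool.toNat_true, Bool.toNat_false] at hb0 hz ⊢; omega, fun b hb => ?_⟩
            simp only [FF, Finset.mem_union]
            right
            rw [if_neg (by omega), Finset.mem_biUnion]
            exact ⟨y, hopt, by rw [if_pos hyv]; exact hmem b hb⟩
          | false =>
            refine ⟨b0 + 1, by simp only [Bool.toNat_true, Bool.toNat_false] at hb0 hz ⊢; omega, fun b hb => ?_⟩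
            simp only [FF, Finset.mem_union]
            right
            rw [if_neg (by omega), if_neg (by omega), Finset.mem_biUnion]
            exact ⟨y, hopt, by rw [if_pos hyv]; exact hmem (b - 1) (by omega)⟩
        · have hvs : vs (insert s(x, y) K) = insert y (vs K) := by
            rw [vs_insert, Finset.insert_comm, Finset.insert_eq_of_mem hx]
          have hyvS : y ∈ vs S := mem_vs.2 ⟨x, by rw [Sym2.eq_swap]; exact hyS⟩
          have hc2 : (vs S \ vs (insert s(x, y) K)).card + 1 = (vs S \ vs K).card := by
            rw [hvs]
            exact card_sdiff_ins hyvS hyv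
          obtain ⟨b0, hb0, hmem⟩ := ih (t - 1) (y :: x :: l) (insert s(x, y) K) true hKS' h0'
            (by
              rw [hvs]; intro v hv
              rcases List.mem_cons.1 hv with rfl | hv
              · simp
              · simp [hl v hv])
            (by
              rw [hvs]; intro v hv hvl w hw
              simp only [List.mem_cons, not_or] at hvl
              rcases Finset.mem_insert.1 hv with h | hv
              · exact absurd h hvl.1
              · exact Finset.mem_insert_of_mem (hcl v hv (by simp [hvl]) w hw))
            (by
              intro _
              refine ⟨y, x :: l, rfl, ?_, fun h => hyv (h ▸ h0)⟩
              rw [Finset.card_le_one]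
              have : ∀ w ∈ nbr (insert s(x, y) K) y, w = x := by
                intro w hw
                rw [mem_nbr, Finset.mem_insert, Sym2.eq_iff] at hw
                rcases hw with (h | h) | h
                · rw [h.2, h.1]
                · exact h.2
                · exact absurd (mem_vs.2 ⟨w, h⟩) hyv
              intro a ha b hb
              rw [this a ha, this b hb])
            (by simp only [List.length_cons] at hN ⊢; omega) (by omega)
          have hz : (if z ∉ vs (insert s(x, y) K) ∨ (true = true ∧ (y :: x :: l).head? = some z) then 1 else 0) ≤
            (if z ∉ vs K ∨ (fl = true ∧ (x :: l).head? = some z) then 1 else 0) := by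
            rw [hvs]
            by_cases hzK : z ∈ vs K
            · have : y ≠ z := fun h => hyv (h ▸ hzK)
              simp [hzK, this]
            · rw [if_pos (Or.inl hzK)]; split_ifs <;> simp
          cases fl with
          | true =>
            refine ⟨b0, by simp only [Bool.toNat_true, Bool.toNat_false] at hb0 hz ⊢; omega, fun b hb => ?_⟩
            simp only [FF, Finset.mem_union]
            right
            rw [if_neg (by omega), Finset.mem_biUnion]
            exact ⟨y, hopt, by rw [if_neg hyv]; exact hmem b hb⟩
          | false =>
            refine ⟨b0 + 1, by simp only [Bool.toNat_true, Bool.toNat_false] at hb0 hz ⊢; omega, fun b hb => ?_⟩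
            simp only [FF, Finset.mem_union]
            right
            rw [if_neg (by omega), if_neg (by omega), Finset.mem_biUnion]
            exact ⟨y, hopt, by rw [if_neg hyv]; exact hmem (b - 1) (by omega)⟩
      · push Not at hex
        obtain ⟨b0, hb0, hmem⟩ := ih t l K false hKS h0 (fun v hv => hl v (by simp [hv]))
          (by
            intro v hv hvl w hw
            by_cases hvx : v = x
            · subst hvx; exact hex w hw
            · exact hcl v hv (by simp [hvx, hvl]) w hw)
          (by simp) (by simp only [List.length_cons] at hN ⊢; omega) ht
        cases fl with
        | true =>
          obtain ⟨x', l', he, h1, h2⟩ := hfl rfl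
          simp only [List.cons.injEq] at he
          obtain ⟨rfl, rfl⟩ := he
          have hxz : x = z := by
            by_contra hxz
            have hxS : x ∈ vs S := by
              obtain ⟨y, hy⟩ := mem_vs.1 hx; exact mem_vs.2 ⟨y, hKS hy⟩
            have h3 := hdeg x hxS hxz h2
            have : nbr S x ⊆ nbr K x := by
              intro y hy; exact mem_nbr.2 (hex y (mem_nbr.1 hy))
            have := Finset.card_le_card this
            omega
          subst hxz
          refine ⟨b0 + 1, ?_, fun b hb => ?_⟩
          · simp [hx] at hb0 ⊢; omega
          · simp only [FF, Finset.mem_union]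
            left
            rw [if_neg (by omega)]
            exact hmem (b - 1) (by omega)
        | false =>
          refine ⟨b0, by simpa using hb0, fun b hb => ?_⟩
          simp only [FF, Finset.mem_union]
          left
          exact hmem b hb

theorem paths_card {V : Type*} [Fintype V] (G : SimpleGraph V) (r : ℕ) (hr : 1 ≤ r) (hbf : BicycleFree G r)
    (A : Finset V) : ∀ (q : ℕ) (Q : Finset (List V)) (u w : V) (ℓ : ℕ), ℓ ≤ (q + 1) * r →
    (∀ l ∈ Q, l.IsChain G.Adj ∧ NBk l ∧ l.length = ℓ + 1 ∧ l.head? = some u ∧ l.getLast? = some w ∧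
      ∀ x ∈ l, x ∈ A) → Q.card ≤ 3 * (3 * A.card) ^ q := by
  intro q
  induction q with
  | zero =>
    intro Q u w ℓ hℓ hQ
    simpa using card_three_G G r hbf Q u w ℓ (by simpa using hℓ)
      (fun l hl => ⟨(hQ l hl).1, (hQ l hl).2.1, (hQ l hl).2.2.1, (hQ l hl).2.2.2.1, (hQ l hl).2.2.2.2.1⟩)
  | succ q ih =>
    intro Q u w ℓ hℓ hQ
    rcases Q.eq_empty_or_nonempty with rfl | ⟨l0, hl0⟩
    · simp
    have hA : 1 ≤ A.card := by
      obtain ⟨-, -, -, h, -, h2⟩ := hQ l0 hl0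
      exact Finset.card_pos.2 ⟨u, h2 u (List.mem_of_mem_head? h)⟩
    by_cases hlr : ℓ ≤ r
    · have := card_three_G G r hbf Q u w ℓ hlr
        (fun l hl => ⟨(hQ l hl).1, (hQ l hl).2.1, (hQ l hl).2.2.1, (hQ l hl).2.2.2.1, (hQ l hl).2.2.2.2.1⟩)
      have h1 : 1 ≤ (3 * A.card) ^ (q + 1) := Nat.one_le_pow _ _ (by omega)
      omega
    · push Not at hlr
      have hmap : ∀ l ∈ Q, l.getD r u ∈ A := by
        intro l hl
        obtain ⟨-, -, h3, -, -, h6⟩ := hQ l hl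
        rw [List.getD_eq_getElem _ _ (by omega)]
        exact h6 _ (List.getElem_mem _)
      have hfib : ∀ c ∈ A, (Q.filter (fun l => l.getD r u = c)).card ≤ 3 * (3 * (3 * A.card) ^ q) := by
        intro c hc
        set P := Q.filter (fun l => l.getD r u = c) with hP
        have h1 : P.card ≤ ((P.image (List.take (r + 1))) ×ˢ (P.image (List.drop r))).card := by
          apply Finset.card_le_card_of_injOn (fun l => (l.take (r + 1), l.drop r))
          · intro l hl
            simp only [Finset.coe_product, Set.mem_prod, Finset.mem_coe]
            exact ⟨Finset.mem_image_of_mem _ hl, Finset.mem_image_of_mem _ hl⟩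
          · intro l _ l' _ h
            simp only [Prod.mk.injEq] at h
            rw [← List.take_append_drop r l, ← List.take_append_drop r l', h.2]
            have := congrArg (List.take r) h.1
            rw [List.take_take, List.take_take, min_eq_left (by omega)] at this
            rw [this]
        rw [Finset.card_product] at h1
        refine h1.trans (Nat.mul_le_mul ?_ ?_)
        · apply card_three_G G r hbf _ u c r le_rfl
          intro l' hl'
          obtain ⟨l, hl, rfl⟩ := Finset.mem_image.1 hl'
          rw [hP, Finset.mem_filter] at hl
          obtain ⟨g1, g2, g3, g4, g5, g6⟩ := hQ l hl.1
          have hc' := hl.2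
          rw [List.getD_eq_getElem _ _ (by omega)] at hc'
          refine ⟨g1.take _, ?_, by simp; omega, ?_, ?_⟩
          · apply NBk.left (l2 := l.drop (r + 1)); rwa [List.take_append_drop]
          · rw [List.head?_take]; simpa using g4
          · rw [List.getLast?_eq_getElem?, List.length_take, List.getElem?_take]
            rw [min_eq_left (by omega), if_pos (by omega), ← hc', Nat.add_sub_cancel]
            exact List.getElem?_eq_getElem _
        · apply ih _ c w (ℓ - r) 
          · have : (q + 1 + 1) * r = (q + 1) * r + r := by ring
            omega
          intro l' hl'
          obtain ⟨l, hl, rfl⟩ := Finset.mem_image.1 hl'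
          rw [hP, Finset.mem_filter] at hl
          obtain ⟨g1, g2, g3, g4, g5, g6⟩ := hQ l hl.1
          have hc' := hl.2
          rw [List.getD_eq_getElem _ _ (by omega)] at hc'
          refine ⟨g1.drop _, ?_, by simp; omega, ?_, ?_, ?_⟩
          · apply NBk.right (l1 := l.take r); rwa [List.take_append_drop]
          · rw [List.head?_drop, ← hc']; exact List.getElem?_eq_getElem _
          · rw [List.getLast?_drop, if_neg (by omega)]; exact g5
          · intro x hx; exact g6 x (List.mem_of_mem_drop hx)
      have := Finset.card_le_mul_card_image_of_maps_to hmap _ hfib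
      calc Q.card ≤ _ := this
        _ = _ := by ring

theorem hikes_card {V : Type*} [Fintype V] (G : SimpleGraph V) (r : ℕ) (hr : 1 ≤ r) (hbf : BicycleFree G r)
    (A : Finset V) (m q : ℕ) (hq : m ≤ (q + 1) * r) (v0 : V) (Q : Finset (Fin (2 * m + 1) → V))
    (hQ : ∀ f ∈ Q, IsHike G m f ∧ f ⟨0, by omega⟩ = v0 ∧ ∀ i, f i ∈ A) :
    Q.card ≤ (3 * (3 * A.card) ^ q) * (3 * (3 * A.card) ^ q) * A.card := by
  apply Finset.card_le_mul_card_image_of_maps_to (f := fun f => f ⟨m, by omega⟩) (fun f hf => (hQ f hf).2.2 _)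
  intro c hc
  set P := Q.filter (fun f => f ⟨m, by omega⟩ = c) with hP
  let F1 : (Fin (2 * m + 1) → V) → List V := fun f => List.ofFn (fun i : Fin (m + 1) => f ⟨i.1, by omega⟩)
  let F2 : (Fin (2 * m + 1) → V) → List V := fun f => List.ofFn (fun i : Fin (m + 1) => f ⟨2 * m - i.1, by omega⟩)
  have h1 : P.card ≤ ((P.image F1) ×ˢ (P.image F2)).card := by
    apply Finset.card_le_card_of_injOn (fun l => (F1 l, F2 l))
    · intro l hl
      simp only [Finset.coe_product, Set.mem_prod, Finset.mem_coe]
      exact ⟨Finset.mem_image_of_mem _ hl, Finset.mem_image_of_mem _ hl⟩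
    · intro l _ l' _ h
      simp only [Prod.mk.injEq, F1, F2, List.ofFn_inj] at h
      funext i
      by_cases hi : i.1 ≤ m
      · exact congrFun h.1 ⟨i.1, by omega⟩
      · have := congrFun h.2 ⟨2 * m - i.1, by omega⟩
        have e : (⟨2 * m - (2 * m - i.1), by omega⟩ : Fin (2 * m + 1)) = i := by
          apply Fin.ext; simp; omega
        simp only [e] at this
        exact this
  rw [Finset.card_product] at h1
  refine h1.trans (Nat.mul_le_mul ?_ ?_)
  · apply paths_card G r hr hbf A q _ v0 c m hq
    intro l hl
    obtain ⟨f, hf, rfl⟩ := Finset.mem_image.1 hl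
    rw [hP, Finset.mem_filter] at hf
    obtain ⟨⟨a1, a2, a3⟩, a4, a5⟩ := hQ f hf.1
    refine ⟨?_, ?_, by simp [F1], ?_, ?_, ?_⟩
    · rw [List.isChain_iff_getElem]
      intro i hi
      simp only [F1, List.length_ofFn] at hi
      simpa [F1, -List.ofFn_succ] using a1 i (by omega)
    · intro i hi
      simp only [F1, List.length_ofFn] at hi
      simpa [F1, -List.ofFn_succ] using (a3 (i + 1) (by omega) (by omega) (by omega)).symm
    · simp [F1, List.ofFn_succ]; exact a4
    · rw [List.getLast?_eq_getElem?]
      simp [F1, hf.2, -List.ofFn_succ]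
    · intro x hx
      simp only [F1, List.mem_ofFn] at hx
      obtain ⟨i, rfl⟩ := hx
      exact a5 _
  · apply paths_card G r hr hbf A q _ v0 c m hq
    intro l hl
    obtain ⟨f, hf, rfl⟩ := Finset.mem_image.1 hl
    rw [hP, Finset.mem_filter] at hf
    obtain ⟨⟨a1, a2, a3⟩, a4, a5⟩ := hQ f hf.1
    refine ⟨?_, ?_, by simp [F2], ?_, ?_, ?_⟩
    · rw [List.isChain_iff_getElem]
      intro i hi
      simp only [F2, List.length_ofFn] at hi
      have h := (a1 (2 * m - (i + 1)) (by omega)).symm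
      have e : 2 * m - (i + 1) + 1 = 2 * m - i := by omega
      simp only [e] at h
      simpa [F2, -List.ofFn_succ] using h
    · intro i hi
      simp only [F2, List.length_ofFn] at hi
      have h := (a3 (2 * m - (i + 1)) (by omega) (by omega) (by omega))
      have e : 2 * m - (i + 1) + 1 = 2 * m - i := by omega
      have e' : 2 * m - (i + 1) - 1 = 2 * m - (i + 2) := by omega
      simp only [e, e'] at h
      simpa [F2, -List.ofFn_succ] using h
    · simp [F2, List.ofFn_succ]; exact a2.trans a4
    · rw [List.getLast?_eq_getElem?]
      have e : 2 * m - m = m := by omega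
      simp [F2, e, hf.2, -List.ofFn_succ]
    · intro x hx
      simp only [F2, List.mem_ofFn] at hx
      obtain ⟨i, rfl⟩ := hx
      exact a5 _

def ES {V : Type*} (g : ℕ → V) (M : ℕ) : Finset (Sym2 V) :=
  (Finset.range M).image (fun i => s(g i, g (i + 1)))

theorem mem_ES {V : Type*} {g : ℕ → V} {M : ℕ} {e : Sym2 V} :
    e ∈ ES g M ↔ ∃ i, i < M ∧ s(g i, g (i + 1)) = e := by
  simp [ES]

theorem ES_vs {V : Type*} [Fintype V] {g : ℕ → V} {M : ℕ} {x : V} (hx : x ∈ vs (ES g M)) :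
    ∃ i, i ≤ M ∧ g i = x := by
  obtain ⟨y, hy⟩ := mem_vs.1 hx
  obtain ⟨i, hi, he⟩ := mem_ES.1 hy
  rw [Sym2.eq_iff] at he
  rcases he with h | h
  · exact ⟨i, hi.le, h.1⟩
  · exact ⟨i + 1, hi, h.2⟩

theorem vs_ES {V : Type*} [Fintype V] {g : ℕ → V} {M : ℕ} (hM : 1 ≤ M) {i : ℕ} (hi : i ≤ M) :
    g i ∈ vs (ES g M) := by
  rw [mem_vs]
  by_cases h : i < M
  · exact ⟨g (i + 1), mem_ES.2 ⟨i, h, rfl⟩⟩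
  · refine ⟨g (i - 1), mem_ES.2 ⟨i - 1, by omega, ?_⟩⟩
    rw [Nat.sub_add_cancel (by omega), Sym2.eq_swap]

theorem ES_card {V : Type*} (g : ℕ → V) (M : ℕ) :
    ((Finset.range (M + 1)).image g).card ≤ (ES g M).card + 1 := by
  induction M with
  | zero => simp
  | succ M ih =>
    rw [Finset.range_add_one, Finset.image_insert]
    have hE : ES g (M + 1) = insert s(g M, g (M + 1)) (ES g M) := by
      rw [ES, Finset.range_add_one, Finset.image_insert, ES]
    by_cases h : g (M + 1) ∈ (Finset.range (M + 1)).image g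
    · rw [Finset.insert_eq_of_mem h, hE]
      have := Finset.card_le_card (Finset.subset_insert s(g M, g (M + 1)) (ES g M))
      omega
    · rw [Finset.card_insert_of_notMem h, hE, Finset.card_insert_of_notMem]
      · omega
      · intro h'
        apply h
        obtain ⟨i, hi, he⟩ := mem_ES.1 h'
        rw [Sym2.eq_iff] at he
        rcases he with h | h
        · exact Finset.mem_image.2 ⟨i + 1, by simp; omega, h.2⟩
        · exact Finset.mem_image.2 ⟨i, by simp; omega, h.1⟩

def ext {V : Type*} {m : ℕ} (f : Fin (2 * m + 1) → V) (i : ℕ) : V :=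
  if h : i < 2 * m + 1 then f ⟨i, h⟩ else f ⟨0, by omega⟩

theorem ext_eq {V : Type*} {m : ℕ} (f : Fin (2 * m + 1) → V) (i : ℕ) (h : i < 2 * m + 1) :
    ext f i = f ⟨i, h⟩ := by rw [ext, dif_pos h]

theorem hike_E {V : Type*} [DecidableEq V] (m : ℕ) (f : Fin (2 * m + 1) → V) (hf : IsSingletonFree m f) :
    (ES (ext f) (2 * m)).card ≤ m := by
  have h : ∀ e ∈ ES (ext f) (2 * m), 2 ≤ ((Finset.range (2 * m)).filter
      (fun i => s(ext f i, ext f (i + 1)) = e)).card := by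
    intro e he
    have h1 := hf e
    have h2 : edgeCount m f e = ((Finset.range (2 * m)).filter
      (fun i => s(ext f i, ext f (i + 1)) = e)).card := by
      rw [edgeCount]
      apply Finset.card_bij (fun i _ => i.1)
      · intro i hi
        rw [Finset.mem_filter] at hi ⊢
        refine ⟨by simp, ?_⟩
        rw [ext_eq _ _ (by omega), ext_eq _ _ (by omega)]
        exact hi.2
      · intro i _ j _ h; exact Fin.ext h
      · intro i hi
        rw [Finset.mem_filter, Finset.mem_range] at hi
        refine ⟨⟨i, hi.1⟩, ?_, rfl⟩
        rw [Finset.mem_filter]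
        refine ⟨by simp, ?_⟩
        have := hi.2
        rwa [ext_eq _ _ (by omega), ext_eq _ _ (by omega)] at this
    rw [h2] at h1
    obtain ⟨i, hi, h3⟩ := mem_ES.1 he
    have : 0 < ((Finset.range (2 * m)).filter
      (fun i => s(ext f i, ext f (i + 1)) = e)).card := Finset.card_pos.2 ⟨i, by simp [hi, h3]⟩
    omega
  have := Finset.mul_card_image_le_card_of_maps_to (s := Finset.range (2 * m)) (t := ES (ext f) (2 * m)) 
    (f := fun i => s(ext f i, ext f (i + 1))) (fun i hi => mem_ES.2 ⟨i, by simpa using hi, rfl⟩) 2 h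
  rw [Finset.card_range] at this
  omega

theorem hike_V {V : Type*} [Fintype V] (m : ℕ) (f : Fin (2 * m + 1) → V) :
    (vs (ES (ext f) (2 * m))).card ≤ (ES (ext f) (2 * m)).card + 1 := by
  refine le_trans (Finset.card_le_card ?_) (ES_card (ext f) (2 * m))
  intro x hx
  obtain ⟨i, hi, rfl⟩ := ES_vs hx
  exact Finset.mem_image.2 ⟨i, by simp; omega, rfl⟩

theorem hike_mem {V : Type*} [Fintype V] (G : SimpleGraph V) (r : ℕ) (hr : 2 ≤ r)
    (hbf : BicycleFree G r) (m : ℕ) (hm : 2 ≤ m) (f : Fin (2 * m + 1) → V) 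
    (hh : IsHike G m f) (hE : (ES (ext f) (2 * m)).card ≤ m) (b : ℕ)
    (hb : ⌊(m : ℝ) * Real.log (3 * (m + 1)) / (2 * (r - 1))⌋₊ + 2 ≤ b) :
    ES (ext f) (2 * m) ∈ FF G (2 * m) (m - 1) b [ext f 1, ext f 0] {s(ext f 0, ext f 1)} true := by
  obtain ⟨a1, a2, a3⟩ := hh
  set g := ext f with hg
  set S := ES g (2 * m) with hSd
  have hV : (vs S).card ≤ S.card + 1 := hike_V m f
  have b1 : ∀ i, i < 2 * m → G.Adj (g i) (g (i + 1)) := by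
    intro i hi
    rw [hg, ext_eq _ _ (by omega), ext_eq _ _ (by omega)]; exact a1 i hi
  have b2 : g (2 * m) = g 0 := by
    rw [hg, ext_eq _ _ (by omega), ext_eq _ _ (by omega)]; exact a2
  have b3 : ∀ i, 1 ≤ i → i < 2 * m → i ≠ m → g (i + 1) ≠ g (i - 1) := by
    intro i h1 h2 h3
    rw [hg, ext_eq _ _ (by omega), ext_eq _ _ (by omega)]; exact a3 i h1 h2 h3
  have hS : ∀ e ∈ S, e ∈ G.edgeSet := by
    intro e he
    obtain ⟨i, hi, rfl⟩ := mem_ES.1 he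
    exact b1 i hi
  have hdeg : ∀ v ∈ vs S, v ≠ g m → v ≠ g 0 → 2 ≤ (nbr S v).card := by
    intro v hv hvm hv0
    obtain ⟨i, hi, rfl⟩ := ES_vs hv
    have i0 : i ≠ 0 := by rintro rfl; exact hv0 rfl
    have im : i ≠ m := by rintro rfl; exact hvm rfl
    have i2 : i ≠ 2 * m := by rintro rfl; exact hv0 b2
    have h1 : g (i + 1) ∈ nbr S (g i) := mem_nbr.2 (mem_ES.2 ⟨i, by omega, rfl⟩)
    have h2 : g (i - 1) ∈ nbr S (g i) := mem_nbr.2 (mem_ES.2 ⟨i - 1, by omega, by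
      rw [Nat.sub_add_cancel (by omega), Sym2.eq_swap]⟩)
    have := Finset.one_lt_card.2 ⟨_, h1, _, h2, b3 i (by omega) (by omega) im⟩
    omega
  have hconn : ∀ K ⊆ S, g 0 ∈ vs K → K ≠ S → ∃ x y, s(x, y) ∈ S ∧ s(x, y) ∉ K ∧ x ∈ vs K := by
    intro K hK h0 hne
    have hex : ∃ i, i < 2 * m ∧ s(g i, g (i + 1)) ∉ K := by
      by_contra hcon
      push Not at hcon
      apply hne
      apply Finset.Subset.antisymm hK
      intro e he
      obtain ⟨i, hi, rfl⟩ := mem_ES.1 he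
      exact hcon i hi
    have h1 := Nat.find_spec hex
    refine ⟨g (Nat.find hex), g (Nat.find hex + 1), mem_ES.2 ⟨_, h1.1, rfl⟩, h1.2, ?_⟩
    by_cases hz : Nat.find hex = 0
    · rw [hz]; exact h0
    · have h2 := Nat.find_min hex (m := Nat.find hex - 1) (by omega)
      push Not at h2
      have h3 := h2 (by omega)
      rw [Nat.sub_add_cancel (by omega), Sym2.eq_swap] at h3
      exact mem_vs.2 ⟨_, h3⟩
  have h01 : g 1 ≠ g 0 := (b1 0 (by omega)).ne'
  have hvsK : vs ({s(g 0, g 1)} : Finset (Sym2 V)) = {g 0, g 1} := by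
    have := vs_insert (∅ : Finset (Sym2 V)) (g 0) (g 1)
    rw [show vs (∅ : Finset (Sym2 V)) = ∅ by ext; simp [mem_vs]] at this
    simpa using this
  have hKS : {s(g 0, g 1)} ⊆ S := by
    rw [Finset.singleton_subset_iff]
    exact mem_ES.2 ⟨0, by omega, rfl⟩
  have hc1 : (S \ {s(g 0, g 1)}).card + 1 = S.card := by
    have := Finset.card_sdiff_add_card_eq_card hKS
    simpa using this
  have hc2 : (vs S \ vs {s(g 0, g 1)}).card + 2 = (vs S).card := by
    have h : vs ({s(g 0, g 1)} : Finset (Sym2 V)) ⊆ vs S := by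
      rw [hvsK]; intro x hx
      simp only [Finset.mem_insert, Finset.mem_singleton] at hx
      rcases hx with rfl | rfl
      · exact vs_ES (by omega) (by omega)
      · exact vs_ES (by omega) (by omega)
    have := Finset.card_sdiff_add_card_eq_card h
    have h2 : (vs ({s(g 0, g 1)} : Finset (Sym2 V))).card = 2 := by
      rw [hvsK]; exact Finset.card_pair h01.symm
    omega
  obtain ⟨b0, hb0, hmem⟩ := FF_mem G S (g 0) (g m) hS hconn hdeg (2 * m) (m - 1) [g 1, g 0] {s(g 0, g 1)} true
    hKS (by rw [hvsK]; simp) (by rw [hvsK]; simp)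
    (by rw [hvsK]; intro v hv hvl; simp at hv hvl; tauto)
    (by
      intro _
      refine ⟨_, _, rfl, ?_, h01⟩
      rw [Finset.card_le_one]
      have : ∀ w ∈ nbr ({s(g 0, g 1)} : Finset (Sym2 V)) (g 1), w = g 0 := by
        intro w hw
        rw [mem_nbr, Finset.mem_singleton, Sym2.eq_iff] at hw
        rcases hw with h | h
        · exact absurd h.1 h01
        · exact h.2
      intro a ha b hb
      rw [this a ha, this b hb])
    (by simp only [List.length_cons, List.length_nil]; omega) (by omega)
  apply hmem
  refine le_trans ?_ hb
  have hb1 : b0 + (vs S).card ≤ S.card + 2 := by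
    have : (if g m ∉ vs {s(g 0, g 1)} ∨ true = true ∧ [g 1, g 0].head? = some (g m) then 1 else 0) ≤ 1 := by
      split_ifs <;> simp
    simp only [Bool.toNat_true] at hb0 this
    omega
  have hne : 1 ≤ (vs S).card := by omega
  have hmo := moore G r hr hbf hS hne
  have hr' : (2 : ℝ) ≤ r := by exact_mod_cast hr
  have hE' : (S.card : ℝ) ≤ m := by exact_mod_cast hE
  have hV' : ((vs S).card : ℝ) ≤ m + 1 := by
    have : (vs S).card ≤ m + 1 := by omega
    exact_mod_cast this
  have hne' : (1 : ℝ) ≤ (vs S).card := by exact_mod_cast hne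
  have hle : (S.card : ℝ) * Real.log (3 * (vs S).card) / (2 * (r - 1)) ≤ 
      (m : ℝ) * Real.log (3 * (m + 1)) / (2 * (r - 1)) := by
    have h1 : Real.log (3 * (vs S).card) ≤ Real.log (3 * (m + 1)) :=
      Real.log_le_log (by linarith) (by linarith)
    have h2 : 0 ≤ Real.log (3 * (vs S).card) := Real.log_nonneg (by linarith)
    apply div_le_div_of_nonneg_right _ (by linarith)
    exact mul_le_mul hE' h1 h2 (by positivity)
  suffices b0 - 2 ≤ ⌊(m : ℝ) * Real.log (3 * (m + 1)) / (2 * (r - 1))⌋₊ by omega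
  apply Nat.le_floor
  by_cases h : b0 ≤ 2
  · rw [Nat.sub_eq_zero_of_le h]
    have : 0 ≤ Real.log (3 * ((m : ℝ) + 1)) := Real.log_nonneg (by have : (0 : ℝ) ≤ m := by positivity
                                                                   linarith)
    have h2 : (0 : ℝ) ≤ 2 * (r - 1) := by linarith
    push_cast
    positivity
  · rw [Nat.cast_sub (by omega)]
    have : (b0 : ℝ) + (vs S).card ≤ S.card + 2 := by exact_mod_cast hb1
    push_cast
    linarith

theorem hike_total {V : Type*} [Fintype V] (G : SimpleGraph V) {d : ℕ} (hd : 2 ≤ d)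
    (hreg : ∀ v, (G.neighborFinset v).card = d) (r : ℕ) (hr : 2 ≤ r)
    (hbf : BicycleFree G r) (m : ℕ) (hm : 2 ≤ m) (q : ℕ) (hq : m ≤ (q + 1) * r) (X : ℝ) (hX : 1 ≤ X)
    (Q : Finset (Fin (2 * m + 1) → V))
    (hQ : ∀ f ∈ Q, IsHike G m f ∧ (ES (ext f) (2 * m)).card ≤ m) (b : ℕ)
    (hb : ⌊(m : ℝ) * Real.log (3 * (m + 1)) / (2 * (r - 1))⌋₊ + 2 ≤ b) :
    (Q.card : ℝ) ≤ (3 * (3 * ((m : ℝ) + 1)) ^ q * (3 * (3 * ((m : ℝ) + 1)) ^ q) * (m + 1)) *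
      (Fintype.card V * (d * (((d : ℝ) - 1) ^ (m - 1) * X ^ b * (1 + 1 / X) ^ (2 * m)))) := by
  let T1 : V → Finset (Σ _ : V, Finset (Sym2 V)) := fun v0 =>
    (G.neighborFinset v0).sigma (fun v1 => FF G (2 * m) (m - 1) b [v1, v0] {s(v0, v1)} true)
  let T : Finset (Σ _ : V, Σ _ : V, Finset (Sym2 V)) := Finset.univ.sigma T1
  let F : (Fin (2 * m + 1) → V) → (Σ _ : V, Σ _ : V, Finset (Sym2 V)) :=
    fun f => ⟨ext f 0, ext f 1, ES (ext f) (2 * m)⟩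
  have hmap : ∀ f ∈ Q, F f ∈ T := by
    intro f hf
    simp only [F, T, T1, Finset.mem_sigma, Finset.mem_univ, true_and]
    refine ⟨?_, hike_mem G r hr hbf m hm f (hQ f hf).1 (hQ f hf).2 b hb⟩
    rw [SimpleGraph.mem_neighborFinset, ext_eq _ _ (by omega), ext_eq _ _ (by omega)]
    exact (hQ f hf).1.1 0 (by omega)
  have hfib : ∀ c ∈ T, (Q.filter (fun f => F f = c)).card ≤
      (3 * (3 * (m + 1)) ^ q) * (3 * (3 * (m + 1)) ^ q) * (m + 1) := by
    rintro ⟨v0, v1, S⟩ -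
    rcases (Q.filter (fun f => F f = ⟨v0, v1, S⟩)).eq_empty_or_nonempty with h | ⟨f0, hf0⟩
    · rw [h]; simp
    have key : ∀ f ∈ (Q.filter (fun f => F f = ⟨v0, v1, S⟩)), f ∈ Q ∧ ext f 0 = v0 ∧ ES (ext f) (2 * m) = S := by
      intro f hf
      rw [Finset.mem_filter] at hf
      simp only [F, Sigma.mk.injEq] at hf
      refine ⟨hf.1, hf.2.1, ?_⟩
      have h := eq_of_heq hf.2.2
      simp only [Sigma.mk.injEq, heq_eq_eq] at h
      exact h.2
    have hA : (vs S).card ≤ m + 1 := by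
      obtain ⟨h1, h2, h3⟩ := key f0 hf0
      rw [← h3]
      have := hike_V m f0
      have := (hQ f0 h1).2
      omega
    have := hikes_card G r (by omega) hbf (vs S) m q hq v0 (Q.filter (fun f => F f = ⟨v0, v1, S⟩)) (by
      intro f hf
      obtain ⟨h1, h2, h3⟩ := key f hf
      refine ⟨(hQ f h1).1, ?_, ?_⟩
      · rw [← h2, ext_eq _ _ (by omega)]
      · intro i
        have := vs_ES (g := ext f) (M := 2 * m) (by omega) (i := i.1) (by omega)
        rwa [h3, ext_eq _ _ i.2] at this)
    refine this.trans ?_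
    gcongr
  have h1 := Finset.card_le_mul_card_image_of_maps_to hmap _ hfib
  have h2 : (T.card : ℝ) ≤ Fintype.card V * (d * (((d : ℝ) - 1) ^ (m - 1) * X ^ b * (1 + 1 / X) ^ (2 * m))) := by
    simp only [T, T1, Finset.card_sigma]
    push_cast
    rw [← nsmul_eq_mul, ← Finset.card_univ]
    apply Finset.sum_le_card_nsmul
    intro v0 _
    rw [← nsmul_eq_mul, ← hreg v0]
    apply Finset.sum_le_card_nsmul
    intro v1 hv1
    rw [hreg v0]
    apply FF_card G hd hreg X hX
    · intro e he
      rw [Finset.mem_singleton] at he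
      subst he
      simpa using hv1
    · intro v hv
      simp only [List.mem_cons, List.not_mem_nil, or_false] at hv
      rw [mem_vs]
      rcases hv with rfl | rfl
      · exact ⟨v0, by rw [Finset.mem_singleton, Sym2.eq_swap]⟩
      · exact ⟨v1, by simp⟩
  calc (Q.card : ℝ) ≤ (((3 * (3 * (m + 1)) ^ q) * (3 * (3 * (m + 1)) ^ q) * (m + 1) * T.card : ℕ) : ℝ) := by
        exact_mod_cast h1
    _ = (3 * (3 * ((m : ℝ) + 1)) ^ q * (3 * (3 * ((m : ℝ) + 1)) ^ q) * (m + 1)) * T.card := by push_cast; ring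
    _ ≤ _ := by gcongr

theorem num_core (m r d : ℕ) (δ : ℝ) (hδ0 : 0 < δ) (hδ1 : δ ≤ 1 / 10) (hm : 2 ≤ m) (hr : 11 ≤ r) (hd : 3 ≤ d)
    (hk : Real.log (m + 1) ≤ δ * r) :
    ∃ X : ℝ, 1 ≤ X ∧ 9 * (X ^ (⌊(m : ℝ) * Real.log (3 * (m + 1)) / (2 * (r - 1))⌋₊ + 2) * (1 + 1 / X) ^ (2 * m)) ≤
      64 * ((m : ℝ) + 1) ^ 2 * r * (Real.exp (5 * (δ * (m + 1)) * (- Real.log (5 * δ))) * (d : ℝ) ^ (2 * (δ * (m + 1)))) := by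
  have hm' : (2 : ℝ) ≤ m := by exact_mod_cast hm
  have hr' : (11 : ℝ) ≤ r := by exact_mod_cast hr
  have hd' : (3 : ℝ) ≤ d := by exact_mod_cast hd
  set κ : ℝ := (m : ℝ) + 1 with hκ
  have hκ3 : 3 ≤ κ := by linarith
  set y := δ * κ with hy
  have hy0 : 0 < y := by positivity
  set L := - Real.log (5 * δ) with hL
  have hl2 : 0 < Real.log 2 := Real.log_pos (by norm_num)
  have hLl : Real.log 2 ≤ L := by
    rw [hL, ← Real.log_inv]
    apply Real.log_le_log (by norm_num)
    rw [le_inv_comm₀ (by norm_num) (by positivity)]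
    norm_num; linarith
  have hl5 : Real.log 5 ≤ 3 * Real.log 2 := by
    rw [show (3 : ℝ) * Real.log 2 = Real.log (2 ^ 3) by rw [Real.log_pow]; norm_num]
    exact Real.log_le_log (by norm_num) (by norm_num)
  have hlδ : - Real.log δ = L + Real.log 5 := by
    rw [hL, Real.log_mul (by norm_num) hδ0.ne']; ring
  set β := (m : ℝ) * Real.log (3 * κ) / (2 * (r - 1)) with hβ
  have hlk0 : 0 ≤ Real.log κ := Real.log_nonneg (by linarith)
  have hβ1 : β ≤ 11 / 10 * y := by
    rw [hβ, div_le_iff₀ (by linarith)]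
    have h1 : Real.log (3 * κ) ≤ 2 * (δ * r) := by
      rw [Real.log_mul (by norm_num) (by linarith)]
      have := Real.log_le_log (by norm_num) hκ3
      linarith
    calc (m : ℝ) * Real.log (3 * κ) ≤ κ * (2 * (δ * r)) := by
          apply mul_le_mul (by linarith) h1 _ (by linarith)
          exact Real.log_nonneg (by linarith)
      _ = y * (2 * r) := by rw [hy]; ring
      _ ≤ y * (11 / 5 * (r - 1)) := by
          apply mul_le_mul_of_nonneg_left _ hy0.le
          linarith
      _ = _ := by ring
  have hβ0 : 0 ≤ β := by
    rw [hβ]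
    have : 0 ≤ Real.log (3 * κ) := Real.log_nonneg (by linarith)
    have h2 : (0 : ℝ) ≤ 2 * (r - 1) := by linarith
    positivity
  have key : ∀ X : ℝ, 1 ≤ X → X ≤ κ → X ^ (⌊β⌋₊ + 2) * (1 + 1 / X) ^ (2 * m) ≤
      κ ^ 2 * Real.exp (11 / 10 * y * Real.log X + 2 * κ / X) := by
    intro X hX hXκ
    have hX0 : 0 < X := by linarith
    have h1 : X ^ ⌊β⌋₊ ≤ Real.exp (11 / 10 * y * Real.log X) := by
      rw [← Real.rpow_natCast, Real.rpow_def_of_pos hX0]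
      apply Real.exp_le_exp.2
      rw [mul_comm]
      apply mul_le_mul_of_nonneg_right _ (Real.log_nonneg hX)
      exact (Nat.floor_le hβ0).trans hβ1
    have h2 : (1 + 1 / X) ^ (2 * m) ≤ Real.exp (2 * κ / X) := by
      calc (1 + 1 / X) ^ (2 * m) ≤ (Real.exp (1 / X)) ^ (2 * m) := by
            gcongr
            rw [add_comm]; exact Real.add_one_le_exp _
        _ = Real.exp (2 * m / X) := by rw [← Real.exp_nat_mul]; congr 1; push_cast; ring
        _ ≤ _ := by
            apply Real.exp_le_exp.2
            gcongr
            linarith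
    rw [pow_add, Real.exp_add]
    have h3 : X ^ 2 ≤ κ ^ 2 := by gcongr
    calc X ^ ⌊β⌋₊ * X ^ 2 * (1 + 1 / X) ^ (2 * m) ≤ Real.exp (11 / 10 * y * Real.log X) * κ ^ 2 * Real.exp (2 * κ / X) := by
          gcongr
      _ = _ := by ring
  have hyL : 11 / 10 * y * Real.log 5 ≤ 39 / 10 * y * L := by nlinarith
  have he1 : Real.exp 2 ≤ 9 := by
    have := Real.exp_one_lt_three
    rw [show (2 : ℝ) = 1 + 1 by norm_num, Real.exp_add]
    nlinarith [Real.exp_pos 1]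
  rcases le_total y 1 with hy1 | hy1
  · refine ⟨κ, by linarith, ?_⟩
    have h1 := key κ (by linarith) le_rfl
    rw [mul_div_assoc, div_self (by linarith), mul_one, Real.exp_add] at h1
    have hlk : Real.log κ ≤ L + Real.log 5 := by
      have : Real.log y ≤ 0 := Real.log_nonpos hy0.le hy1
      rw [hy, Real.log_mul hδ0.ne' (by linarith)] at this
      linarith
    have h2 : Real.exp (11 / 10 * y * Real.log κ) ≤ Real.exp (5 * y * L) := by
      apply Real.exp_le_exp.2
      have : 11 / 10 * y * Real.log κ ≤ 11 / 10 * y * (L + Real.log 5) := by gcongr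
      linarith
    have h3 : (1 : ℝ) ≤ (d : ℝ) ^ (2 * y) := Real.one_le_rpow (by linarith) (by linarith)
    calc 9 * (κ ^ (⌊β⌋₊ + 2) * (1 + 1 / κ) ^ (2 * m)) ≤ 9 * (κ ^ 2 * (Real.exp (11 / 10 * y * Real.log κ) * Real.exp 2)) := by linarith
      _ ≤ 9 * (κ ^ 2 * (Real.exp (5 * y * L) * 9)) := by gcongr
      _ = 81 * κ ^ 2 * 1 * (Real.exp (5 * y * L) * 1) := by ring
      _ ≤ (64 * r) * κ ^ 2 * 1 * (Real.exp (5 * y * L) * (d : ℝ) ^ (2 * y)) := by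
          gcongr
          linarith
      _ = _ := by ring
  · refine ⟨1 / δ, ?_, ?_⟩
    · rw [le_div_iff₀ hδ0]; linarith
    have h1 := key (1 / δ) (by rw [le_div_iff₀ hδ0]; linarith) (by rw [div_le_iff₀ hδ0, mul_comm]; exact hy1)
    have h2 : 11 / 10 * y * Real.log (1 / δ) + 2 * κ / (1 / δ) ≤ 5 * y * L + 2 * y := by
      rw [one_div, Real.log_inv, hlδ, div_inv_eq_mul]
      have : 2 * κ * δ = 2 * y := by rw [hy]; ring
      linarith
    have h3 : Real.exp (2 * y) ≤ (d : ℝ) ^ (2 * y) := by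
      rw [Real.rpow_def_of_pos (by linarith)]
      apply Real.exp_le_exp.2
      have : 1 ≤ Real.log d := by
        rw [Real.le_log_iff_exp_le (by linarith)]
        linarith [Real.exp_one_lt_three]
      nlinarith
    calc 9 * ((1 / δ) ^ (⌊β⌋₊ + 2) * (1 + 1 / (1 / δ)) ^ (2 * m)) ≤ 
          9 * (κ ^ 2 * Real.exp (11 / 10 * y * Real.log (1 / δ) + 2 * κ / (1 / δ))) := by linarith
      _ ≤ 9 * (κ ^ 2 * Real.exp (5 * y * L + 2 * y)) := by gcongr
      _ = 9 * κ ^ 2 * (Real.exp (5 * y * L) * Real.exp (2 * y)) := by rw [Real.exp_add]; ring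
      _ ≤ (64 * r) * κ ^ 2 * (Real.exp (5 * y * L) * (d : ℝ) ^ (2 * y)) := by
          gcongr
          linarith
      _ = _ := by ring

theorem rhs_eq (n d r k : ℕ) (δ : ℝ) (hn : 1 ≤ n) (hd : 3 ≤ d) (hr : 1 ≤ r) (hk : 1 ≤ k) :
    ((2 : ℝ) ^ (Real.logb 2 (16 * (n : ℝ) * k ^ 3 * r * d) / (2 * k)
            + Real.logb 2 ((r : ℝ) * k) / r + binEnt (5 * δ) / 2 + δ * Real.logb 2 d)
          * Real.sqrt ((d : ℝ) - 1)) ^ (2 * k) =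
    (16 * (n : ℝ) * k ^ 3 * r * d) * ((r : ℝ) * k) ^ (2 * k / r : ℝ) * 
      ((2 : ℝ) ^ (binEnt (5 * δ) * k) * (d : ℝ) ^ (2 * (δ * k))) * ((d : ℝ) - 1) ^ k := by
  have hn' : (1 : ℝ) ≤ n := by exact_mod_cast hn
  have hd' : (3 : ℝ) ≤ d := by exact_mod_cast hd
  have hr' : (1 : ℝ) ≤ r := by exact_mod_cast hr
  have hk' : (1 : ℝ) ≤ k := by exact_mod_cast hk
  have h2 : ∀ x : ℝ, 0 < x → ∀ t : ℝ, x ^ t = (2 : ℝ) ^ (Real.logb 2 x * t) := by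
    intro x hx t
    rw [Real.rpow_mul (by norm_num), Real.rpow_logb (by norm_num) (by norm_num) hx]
  rw [mul_pow, pow_mul (Real.sqrt _), Real.sq_sqrt (by linarith)]
  congr 1
  rw [← Real.rpow_natCast, ← Real.rpow_mul (by norm_num)]
  rw [h2 (r * k) (by positivity), h2 d (by positivity)]
  have h3 : (16 * (n : ℝ) * k ^ 3 * r * d) = (2 : ℝ) ^ (Real.logb 2 (16 * (n : ℝ) * k ^ 3 * r * d)) := by
    rw [Real.rpow_logb (by norm_num) (by norm_num) (by positivity)]
  conv_rhs => rw [h3]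
  rw [← Real.rpow_add (by norm_num), ← Real.rpow_add (by norm_num), ← Real.rpow_add (by norm_num)]
  congr 1
  push_cast
  field_simp
  ring

theorem ent_le (k δ : ℝ) (hk : 0 ≤ k) (hδ0 : 0 < δ) (hδ1 : δ ≤ 1 / 10) :
    Real.exp (5 * (δ * k) * (- Real.log (5 * δ))) ≤ (2 : ℝ) ^ (binEnt (5 * δ) * k) := by
  rw [Real.rpow_def_of_pos (by norm_num)]
  apply Real.exp_le_exp.2
  have hl2 : 0 < Real.log 2 := Real.log_pos (by norm_num)
  have e : Real.log 2 * (binEnt (5 * δ) * k) = (-(5 * δ) * Real.log (5 * δ) - (1 - 5 * δ) * Real.log (1 - 5 * δ)) * k := by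
    rw [binEnt, Real.logb, Real.logb]; field_simp
  rw [e]
  have : Real.log (1 - 5 * δ) ≤ 0 := Real.log_nonpos (by linarith) (by linarith)
  have h2 : 0 ≤ -((1 - 5 * δ) * Real.log (1 - 5 * δ)) * k := by
    apply mul_nonneg _ hk
    nlinarith
  nlinarith

/-- Second counting bound for singleton-free `(k-1)`-hikes in a `d`-regular graph that is
bicycle-free at radius `r`, in the regime `3 ≤ k ≤ e^(δr)`. -/
theorem stmt10 {n d r k : ℕ} (hd : 3 ≤ d) {δ : ℝ} (hδ0 : 0 < δ) (hδ1 : δ ≤ 1 / 10)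
    (G : SimpleGraph (Fin n)) (hreg : G.IsRegularOfDegree d) (hbf : BicycleFree G r)
    (hk3 : 3 ≤ k) (hk : (k : ℝ) ≤ Real.exp (δ * r)) :
    ({f : Fin (2 * (k - 1) + 1) → Fin n |
        IsHike G (k - 1) f ∧ IsSingletonFree (k - 1) f}.ncard : ℝ)
      ≤ ((2 : ℝ) ^ (Real.logb 2 (16 * (n : ℝ) * k ^ 3 * r * d) / (2 * k)
            + Real.logb 2 ((r : ℝ) * k) / r + binEnt (5 * δ) / 2 + δ * Real.logb 2 d)
          * Real.sqrt ((d : ℝ) - 1)) ^ (2 * k) := by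
  have hlk : Real.log k ≤ δ * r := by
    rw [Real.log_le_iff_le_exp (by positivity)]; exact hk
  have hk3' : (3 : ℝ) ≤ k := by exact_mod_cast hk3
  have hr : 11 ≤ r := by
    have h1 : 1 < Real.log k := by
      rw [Real.lt_log_iff_exp_lt (by positivity)]
      linarith [Real.exp_one_lt_three]
    have h2 : δ * r ≤ 1 / 10 * r := by gcongr
    have h3 : (10 : ℝ) < r := by linarith
    exact_mod_cast h3
  rcases Nat.eq_zero_or_pos n with hn | hn
  · subst hn
    have : {f : Fin (2 * (k - 1) + 1) → Fin 0 | IsHike G (k - 1) f ∧ IsSingletonFree (k - 1) f} = ∅ := by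
      ext f
      exact (f ⟨0, by omega⟩).elim0
    rw [this, Set.ncard_empty, Nat.cast_zero]
    positivity
  rw [rhs_eq n d r k δ hn hd (by omega) (by omega)]
  obtain ⟨m, rfl⟩ : ∃ m, k = m + 1 := ⟨k - 1, by omega⟩
  change (({f : Fin (2 * m + 1) → Fin n | IsHike G m f ∧ IsSingletonFree m f}.ncard : ℕ) : ℝ) ≤ _
  rw [Set.ncard_eq_toFinset_card']
  have hm : 2 ≤ m := by omega
  have hd' : (3 : ℝ) ≤ d := by exact_mod_cast hd
  have hr' : (11 : ℝ) ≤ r := by exact_mod_cast hr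
  push_cast at hlk hk3' ⊢
  obtain ⟨X, hX, hnum⟩ := num_core m r d δ hδ0 hδ1 hm hr hd hlk
  have hq : m ≤ ((m - 1) / r + 1) * r := by
    have h1 := Nat.div_add_mod (m - 1) r
    have h2 := Nat.mod_lt (m - 1) (show r > 0 by omega)
    have h3 : ((m - 1) / r + 1) * r = r * ((m - 1) / r) + r := by ring
    omega
  have htot := hike_total G (d := d) (by omega) (by
      intro v
      rw [SimpleGraph.card_neighborFinset_eq_degree]
      convert hreg v) r (by omega) hbf m hm ((m - 1) / r) hq X hX
    ({f : Fin (2 * m + 1) → Fin n | IsHike G m f ∧ IsSingletonFree m f}.toFinset) (by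
      intro f hf
      rw [Set.mem_toFinset] at hf
      exact ⟨hf.1, hike_E m f hf.2⟩) _ le_rfl
  refine htot.trans ?_
  set q := (m - 1) / r with hqd
  set B := X ^ (⌊(m : ℝ) * Real.log (3 * (m + 1)) / (2 * (r - 1))⌋₊ + 2) * (1 + 1 / X) ^ (2 * m) with hB
  set κ : ℝ := (m : ℝ) + 1 with hκ
  have hent := ent_le κ δ (by linarith) hδ0 hδ1
  set W := (2 : ℝ) ^ (binEnt (5 * δ) * κ) * (d : ℝ) ^ (2 * (δ * κ)) with hW
  have hW0 : 0 ≤ W := by positivity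
  have hnum2 : 9 * B ≤ 64 * κ ^ 2 * r * W := by
    refine hnum.trans ?_
    rw [hW]
    gcongr
  have hqk : (3 * κ) ^ q * (3 * κ) ^ q ≤ ((r : ℝ) * κ) ^ (2 * κ / r : ℝ) := by
    rw [← pow_add, ← Real.rpow_natCast]
    have h1 : ((q + q : ℕ) : ℝ) ≤ 2 * κ / r := by
      have : (q : ℝ) ≤ κ / r := by
        refine (Nat.cast_div_le (α := ℝ)).trans ?_
        gcongr
        have : ((m - 1 : ℕ) : ℝ) ≤ m := by exact_mod_cast Nat.sub_le m 1
        linarith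
      push_cast
      rw [mul_div_assoc]; linarith
    calc (3 * κ) ^ ((q + q : ℕ) : ℝ) ≤ ((r : ℝ) * κ) ^ ((q + q : ℕ) : ℝ) := by
          apply Real.rpow_le_rpow (by positivity) _ (by positivity)
          gcongr
          linarith
      _ ≤ _ := Real.rpow_le_rpow_of_exponent_le (by nlinarith) h1
  set Z := ((r : ℝ) * κ) ^ (2 * κ / r : ℝ) with hZ
  have hZ0 : 0 ≤ Z := by positivity
  have hB0 : 0 ≤ B := by
    have : 0 < X := by linarith
    positivity
  have hd1 : (0 : ℝ) ≤ (d : ℝ) - 1 := by linarith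
  have hκ0 : 0 ≤ κ := by linarith
  have hdp : 4 * ((d : ℝ) - 1) ^ (m - 1) ≤ ((d : ℝ) - 1) ^ (m + 1) := by
    rw [show m + 1 = (m - 1) + 2 by omega, pow_add, mul_comm]
    apply mul_le_mul_of_nonneg_left _ (by positivity)
    nlinarith
  rw [Fintype.card_fin]
  calc 3 * (3 * κ) ^ q * (3 * (3 * κ) ^ q) * κ * (n * (d * (((d : ℝ) - 1) ^ (m - 1) *
        X ^ (⌊(m : ℝ) * Real.log (3 * κ) / (2 * (r - 1))⌋₊ + 2) * (1 + 1 / X) ^ (2 * m))))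
      = ((3 * κ) ^ q * (3 * κ) ^ q) * (κ * n * d) * ((d : ℝ) - 1) ^ (m - 1) * (9 * B) := by
        rw [hB]; ring
    _ ≤ Z * (κ * n * d) * ((d : ℝ) - 1) ^ (m - 1) * (64 * κ ^ 2 * r * W) := by gcongr
    _ = (16 * (n : ℝ) * κ ^ 3 * r * d) * Z * W * (4 * ((d : ℝ) - 1) ^ (m - 1)) := by ring
    _ ≤ _ := by gcongr
end
end

section
/- Every singleton-free k-hike in a graph G traverses at most k distinct edges of G, and its hike graph is a connected subgraph of G that has at most two vertices of degree one. -/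
open scoped Classical

noncomputable section

/-- The hike graph of a hike: the subgraph of `G` consisting of the traversed vertices
and edges. -/
def hikeGraph {V : Type*} (G : SimpleGraph V) (k : ℕ) (f : Fin (2 * k + 1) → V)
    (hf : IsHike G k f) : G.Subgraph where
  verts := Set.range f
  Adj a b := ∃ (i : ℕ) (h : i < 2 * k),
    (f ⟨i, by omega⟩ = a ∧ f ⟨i + 1, by omega⟩ = b) ∨
    (f ⟨i, by omega⟩ = b ∧ f ⟨i + 1, by omega⟩ = a)
  adj_sub := by
    rintro a b ⟨i, h, hcase⟩
    rcases hcase with ⟨ha, hb⟩ | ⟨ha, hb⟩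
    · rw [← ha, ← hb]; exact hf.1 i h
    · rw [← ha, ← hb]; exact (hf.1 i h).symm
  edge_vert := by
    rintro a b ⟨i, h, hcase⟩
    rcases hcase with ⟨ha, _⟩ | ⟨_, hb⟩
    · exact ⟨_, ha⟩
    · exact ⟨_, hb⟩
  symm := by
    constructor
    rintro a b ⟨i, h, hcase⟩
    exact ⟨i, h, hcase.symm⟩

/-- A singleton-free `k`-hike traverses at most `k` distinct edges, and its hike graph is
a connected subgraph with at most two vertices of degree one. -/
theorem stmt11 {V : Type*} [Fintype V] [DecidableEq V] (G : SimpleGraph V) (k : ℕ)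
    (f : Fin (2 * k + 1) → V) (hf : IsHike G k f) (hsf : IsSingletonFree k f) :
    {e : Sym2 V | 0 < edgeCount k f e}.ncard ≤ k ∧
    (hikeGraph G k f hf).Connected ∧
    {v ∈ (hikeGraph G k f hf).verts |
      ((hikeGraph G k f hf).neighborSet v).ncard = 1}.ncard ≤ 2 := by
  refine ⟨?_, ?_, ?_⟩
  · set g : Fin (2 * k) → Sym2 V := fun i =>
      s(f ⟨i.1, Nat.lt_succ_of_lt i.2⟩, f ⟨i.1 + 1, Nat.succ_lt_succ i.2⟩) with hg
    have hS : {e : Sym2 V | 0 < edgeCount k f e} = ↑(Finset.univ.image g) := by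
      ext e
      simp [edgeCount, Finset.card_pos, Finset.Nonempty, hg]
    rw [hS, Set.ncard_coe_finset]
    have h1 := Finset.card_eq_sum_card_image g Finset.univ
    have h2 : (Finset.univ.image g).card * 2 ≤
        ∑ e ∈ Finset.univ.image g, (Finset.univ.filter fun i => g i = e).card := by
      rw [← smul_eq_mul]
      refine Finset.card_nsmul_le_sum _ _ _ ?_
      intro e he
      have h3 : edgeCount k f e = (Finset.univ.filter fun i => g i = e).card := by
        simp only [edgeCount, hg]
      have h4 : 0 < edgeCount k f e := by
        have : e ∈ {e : Sym2 V | 0 < edgeCount k f e} := by rw [hS]; exact he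
        exact this
      have h5 := hsf e
      omega
    rw [← h1] at h2
    simp only [Finset.card_univ, Fintype.card_fin] at h2
    omega
  · have key : ∀ (i : ℕ) (h : i < 2 * k + 1),
        (hikeGraph G k f hf).coe.Reachable ⟨f ⟨0, by omega⟩, ⟨_, rfl⟩⟩ ⟨f ⟨i, h⟩, ⟨_, rfl⟩⟩ := by
      intro i
      induction i with
      | zero => intro h; exact SimpleGraph.Reachable.refl _
      | succ n ih =>
        intro h
        refine (ih (by omega)).trans (SimpleGraph.Adj.reachable ?_)
        exact ⟨n, by omega, Or.inl ⟨rfl, rfl⟩⟩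
    haveI : Nonempty (hikeGraph G k f hf).verts := ⟨⟨f ⟨0, by omega⟩, ⟨_, rfl⟩⟩⟩
    refine ⟨⟨?_⟩⟩
    · rintro ⟨_, ⟨i, hi⟩, rfl⟩ ⟨_, ⟨j, hj⟩, rfl⟩
      exact (key i hi).symm.trans (key j hj)
  · refine le_trans (Set.ncard_le_ncard (t := {f ⟨0, by omega⟩, f ⟨k, by omega⟩}) ?_
      (Set.toFinite _)) ((Set.ncard_insert_le _ _).trans (by simp))
    rintro v ⟨⟨⟨i, hi⟩, rfl⟩, hv⟩
    by_cases h0 : i = 0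
    · subst h0; exact Or.inl rfl
    by_cases hk : i = k
    · subst hk; exact Or.inr rfl
    by_cases h2 : i = 2 * k
    · subst h2; exact Or.inl hf.2.1
    exfalso
    obtain ⟨a, ha⟩ := Set.ncard_eq_one.1 hv
    have m1 : f ⟨i + 1, by omega⟩ ∈ (hikeGraph G k f hf).neighborSet (f ⟨i, hi⟩) :=
      ⟨i, by omega, Or.inl ⟨rfl, rfl⟩⟩
    have m2 : f ⟨i - 1, by omega⟩ ∈ (hikeGraph G k f hf).neighborSet (f ⟨i, hi⟩) := by
      refine ⟨i - 1, by omega, Or.inr ⟨rfl, ?_⟩⟩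
      congr 2
      omega
    rw [ha] at m1 m2
    exact hf.2.2 i (by omega) (by omega) hk (m1.trans m2.symm)
end
end

section
/- Let G be a finite graph with edge set E (each edge carrying a fixed orientation), let H be a finite abelian group, and let D be a ν-biased distribution on the product group H^E. Let χ : H → ℂ* be a nontrivial character of H, and let w = (e₁, …, e_{k−1}, e_{k+1}, …, e_{2k−1}) be the sequence of directed edges of a (k−1)-hike in G such that some undirected edge of G is traversed (in either orientation) exactly once among these steps. For a signing s : E → H, extended to directed edges by s(v,u) = s(u,v)^{−1}, define χ_w(s) = ∏_{i=1}^{k−1} χ(s(e_i)) · ∏_{i=k+1}^{2k−1} χ(s(e_i))^{−1}. Then |E_{s∼D}[χ_w(s)]| ≤ ν. -/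
open scoped Classical

noncomputable section

/-- The oriented edges of `G`: each undirected edge `{u,v}` is oriented as `(u,v)`
with `u < v`. -/
def OEdge {n : ℕ} (G : SimpleGraph (Fin n)) : Type :=
  {p : Fin n × Fin n // G.Adj p.1 p.2 ∧ p.1 < p.2}

instance {n : ℕ} (G : SimpleGraph (Fin n)) : Fintype (OEdge G) :=
  Subtype.fintype _

instance {n : ℕ} (G : SimpleGraph (Fin n)) : DecidableEq (OEdge G) :=
  Classical.decEq _

/-- The extension of a signing `sg` on oriented edges to all directed edges, via
`s(v,u) = s(u,v)⁻¹`. -/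
def sHat {n : ℕ} {H : Type*} [Group H] (G : SimpleGraph (Fin n))
    (sg : OEdge G → H) (u v : Fin n) : H :=
  if h : G.Adj u v ∧ u < v then sg ⟨(u, v), h⟩
  else if h : G.Adj v u ∧ v < u then (sg ⟨(v, u), h⟩)⁻¹
  else 1

theorem sHat_mul_aux {n : ℕ} {H : Type*} [CommGroup H] (G : SimpleGraph (Fin n))
    (a b : OEdge G → H) (u v : Fin n) :
    sHat G (a * b) u v = sHat G a u v * sHat G b u v := by
  unfold sHat
  split_ifs
  · rfl
  · exact mul_inv _ _
  · exact (one_mul 1).symm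

theorem sHat_one_aux {n : ℕ} {H : Type*} [CommGroup H] (G : SimpleGraph (Fin n))
    (u v : Fin n) :
    sHat G (1 : OEdge G → H) u v = 1 := by
  unfold sHat
  split_ifs
  · rfl
  · exact inv_one
  · rfl

def stepHom {n : ℕ} {H : Type*} [CommGroup H] (G : SimpleGraph (Fin n))
    (χ : H →* ℂ) (p : Prop) (u v : Fin n) : (OEdge G → H) →* ℂ where
  toFun sg := if p then χ (sHat G sg u v) else (χ (sHat G sg u v))⁻¹
  map_one' := by simp [sHat_one_aux]
  map_mul' a b := by
    by_cases hp : p <;> simp [hp, sHat_mul_aux, mul_comm]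

def testSg {n : ℕ} {H : Type*} [CommGroup H] (G : SimpleGraph (Fin n))
    (e : Sym2 (Fin n)) (h : H) : OEdge G → H :=
  fun p => if s(p.1.1, p.1.2) = e then h else 1

theorem sHat_testSg_ne {n : ℕ} {H : Type*} [CommGroup H] (G : SimpleGraph (Fin n))
    (e : Sym2 (Fin n)) (h : H) (u v : Fin n) (hne : s(u, v) ≠ e) :
    sHat G (testSg G e h) u v = 1 := by
  have hne' : s(v, u) ≠ e := by rwa [Sym2.eq_swap]
  unfold sHat testSg
  split_ifs <;> simp_all

theorem sHat_testSg_eq {n : ℕ} {H : Type*} [CommGroup H] (G : SimpleGraph (Fin n))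
    (e : Sym2 (Fin n)) (h : H) (u v : Fin n) (he : s(u, v) = e) (ha : G.Adj u v) :
    sHat G (testSg G e h) u v = h ∨ sHat G (testSg G e h) u v = h⁻¹ := by
  have he' : s(v, u) = e := by rwa [Sym2.eq_swap]
  unfold sHat testSg
  rcases lt_or_gt_of_ne ha.ne with hl | hl
  · left
    rw [dif_pos ⟨ha, hl⟩]
    simp [he]
  · right
    rw [dif_neg (fun h => absurd h.2 (not_lt_of_gt hl)), dif_pos ⟨ha.symm, hl⟩]
    simp [he']

/-- For a `(k-1)`-hike with an edge traversed exactly once, the expectation of the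
character `χ_w` under a `ν`-biased distribution is at most `ν` in absolute value. -/
theorem stmt12 {n k : ℕ} (hk : 1 ≤ k) (G : SimpleGraph (Fin n))
    {H : Type*} [CommGroup H] [Fintype H]
    (ν : ℝ) (D : (OEdge G → H) → ℝ) (hD0 : ∀ x, 0 ≤ D x) (hD1 : ∑ x, D x = 1)
    (hbias : ∀ ψ : (OEdge G → H) →* ℂ, ψ ≠ 1 →
      ‖∑ x, (D x : ℂ) * ψ x‖ ≤ ν)
    (χ : H →* ℂ) (hχ : χ ≠ 1)
    (f : Fin (2 * (k - 1) + 1) → Fin n) (hf : IsHike G (k - 1) f)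
    (hsingle : ∃ e : Sym2 (Fin n), edgeCount (k - 1) f e = 1) :
    ‖∑ sg : OEdge G → H, (D sg : ℂ) *
        ∏ i : Fin (2 * (k - 1)),
          (if (i : ℕ) < k - 1 then χ (sHat G sg (f i.castSucc) (f i.succ))
           else (χ (sHat G sg (f i.castSucc) (f i.succ)))⁻¹)‖ ≤ ν := by
  set ψ : (OEdge G → H) →* ℂ := ∏ i : Fin (2 * (k - 1)),
    stepHom G χ ((i : ℕ) < k - 1) (f i.castSucc) (f i.succ) with hψ
  have hval : ∀ sg, ψ sg = ∏ i : Fin (2 * (k - 1)),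
          (if (i : ℕ) < k - 1 then χ (sHat G sg (f i.castSucc) (f i.succ))
           else (χ (sHat G sg (f i.castSucc) (f i.succ)))⁻¹) := by
    intro sg
    rw [hψ, MonoidHom.finsetProd_apply]
    refine Finset.prod_congr rfl fun i _ => ?_
    simp only [stepHom, MonoidHom.coe_mk, OneHom.coe_mk]
    split_ifs <;> rfl
  simp only [← hval]
  apply hbias
  intro h1
  apply hχ
  ext h
  obtain ⟨e, he⟩ := hsingle
  unfold edgeCount at he
  obtain ⟨i0, hi0⟩ := Finset.card_eq_one.mp he
  have hiff : ∀ j : Fin (2 * (k - 1)), s(f j.castSucc, f j.succ) = e ↔ j = i0 := by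
    intro j
    have := Finset.ext_iff.mp hi0 j
    rw [Finset.mem_filter, Finset.mem_singleton] at this
    exact ⟨fun h => this.1 ⟨Finset.mem_univ _, h⟩, fun h => (this.2 h).2⟩
  have h2 := hval (testSg G e h)
  rw [h1, Finset.prod_eq_single i0] at h2
  · have hinv : χ h⁻¹ = (χ h)⁻¹ := by
      have : χ h * χ h⁻¹ = 1 := by rw [← map_mul]; simp
      exact eq_inv_of_mul_eq_one_right this
    have := sHat_testSg_eq G e h _ _ ((hiff i0).2 rfl) (hf.1 i0.1 i0.2)
    rcases this with h3 | h3 <;> rw [h3] at h2 <;> split_ifs at h2 <;>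
      simp only [hinv, MonoidHom.one_apply, inv_inv] at h2 ⊢
    · exact h2.symm
    · exact inv_eq_one.mp h2.symm
    · exact inv_eq_one.mp h2.symm
    · exact h2.symm
  · intro j _ hj
    rw [sHat_testSg_ne G e h _ _ (fun h => hj ((hiff j).1 h))]
    simp
  · simp
end
end

section
/- Let G be a d-regular graph on n vertices with edge set E, let ε ∈ (0,1), let ℓ ≥ 1, let H ≤ Sym(ℓ) be an abelian group, and let D be a ν-biased distribution on the product group H^E with ν ≤ (nℓd²)^{−1}·(ε/d)^{2k}. Assume that the number of singleton-free (k−1)-hikes in G is at most (2^γ·√(d−1))^{2k}. Then for every nontrivial character χ of H, with probability at least 1 − 1/ℓ over s ∼ D, the spectral radius of the signed non-backtracking matrix satisfies ρ(B_s(χ)) ≤ 2^{γ'}·√(d−1) + ε, where γ' = γ + log₂(ℓ·d²)/(2k). -/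
open scoped Classical

noncomputable section

/-- The directed edges of `G`. -/
def DEdge {n : ℕ} (G : SimpleGraph (Fin n)) : Type :=
  {p : Fin n × Fin n // G.Adj p.1 p.2}

instance {n : ℕ} (G : SimpleGraph (Fin n)) : Fintype (DEdge G) :=
  Subtype.fintype _

instance {n : ℕ} (G : SimpleGraph (Fin n)) : DecidableEq (DEdge G) :=
  Classical.decEq _

/-- The signed non-backtracking matrix `B_s(χ)` of `G` with respect to the signing `sg`
and the character `χ`. -/
def Bmat {n : ℕ} {H : Type*} [Group H] (G : SimpleGraph (Fin n))
    (sg : OEdge G → H) (χ : H →* ℂ) : Matrix (DEdge G) (DEdge G) ℂ :=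
  fun p q => if p.val.2 = q.val.1 ∧ p.val.1 ≠ q.val.2
    then χ (sHat G sg q.val.1 q.val.2) else 0

theorem aux_spec {ι : Type*} [Fintype ι] [DecidableEq ι] (M : Matrix ι ι ℂ) (μ : ℂ)
    (hμ : μ ∈ spectrum ℂ M) : ‖μ‖ ^ 2 ≤ ∑ p, ∑ q, ‖M p q‖ ^ 2 := by
  rw [spectrum.mem_iff, Matrix.isUnit_iff_isUnit_det, isUnit_iff_ne_zero, not_not,
    ← Matrix.exists_mulVec_eq_zero_iff] at hμ
  obtain ⟨v, hv, h⟩ := hμ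
  have h' : ∀ p, μ * v p = ∑ q, M p q * v q := by
    intro p
    have := congrFun h p
    rw [Matrix.sub_mulVec, Algebra.algebraMap_eq_smul_one, Matrix.smul_mulVec,
      Matrix.one_mulVec] at this
    simp [Matrix.mulVec, dotProduct, sub_eq_zero] at this
    exact this
  have hpos : 0 < ∑ q, ‖v q‖ ^ 2 := by
    obtain ⟨q, hq⟩ := Function.ne_iff.mp hv
    refine Finset.sum_pos' (fun _ _ => by positivity) ⟨q, Finset.mem_univ _, ?_⟩
    have : 0 < ‖v q‖ := norm_pos_iff.mpr hq
    positivity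
  have key : ‖μ‖ ^ 2 * ∑ q, ‖v q‖ ^ 2 ≤ (∑ p, ∑ q, ‖M p q‖ ^ 2) * ∑ q, ‖v q‖ ^ 2 := by
    rw [Finset.mul_sum, Finset.sum_mul]
    refine Finset.sum_le_sum fun p _ => ?_
    rw [← mul_pow, ← norm_mul, h' p]
    calc ‖∑ q, M p q * v q‖ ^ 2 ≤ (∑ q, ‖M p q‖ * ‖v q‖) ^ 2 := by
          gcongr
          refine (norm_sum_le _ _).trans (le_of_eq ?_)
          simp
      _ ≤ _ := Finset.sum_mul_sq_le_sq_mul_sq _ _ _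
  exact le_of_mul_le_mul_right key hpos

theorem aux_pow {ι : Type*} [Fintype ι] [DecidableEq ι] (M : Matrix ι ι ℂ) (j : ℕ) (p q : ι) :
    (M ^ j) p q = ∑ w : Fin (j + 1) → ι, if w 0 = p ∧ w (Fin.last j) = q then
      ∏ i : Fin j, M (w i.castSucc) (w i.succ) else 0 := by
  induction j generalizing p q with
  | zero =>
    rw [← (Equiv.funUnique (Fin 1) ι).symm.sum_comp]
    simp only [pow_zero, Matrix.one_apply]
    have : ∀ x : ι, (if x = p ∧ x = q then (1 : ℂ) else 0) = if x = p then (if p = q then 1 else 0) else 0 := by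
      intro x; split_ifs <;> grind
    simp [this]
  | succ j ih =>
    rw [pow_succ', Matrix.mul_apply, ← (Fin.consEquiv (fun _ => ι)).sum_comp, Fintype.sum_prod_type]
    symm
    rw [Finset.sum_eq_single p]
    · symm
      simp_rw [ih, Finset.mul_sum]
      rw [Finset.sum_comm]
      refine Finset.sum_congr rfl fun w _ => ?_
      rw [Finset.sum_eq_single (w 0)]
      · rw [Fin.prod_univ_succ]
        simp only [Fin.consEquiv_apply, ← Fin.succ_last, Fin.cons_succ, Fin.cons_zero, true_and,
          Fin.castSucc_zero, ← Fin.succ_castSucc, mul_ite, mul_zero]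
      · intro b _ hb
        rw [if_neg (fun h => hb h.1.symm), mul_zero]
      · simp
    · intro b _ hb
      refine Finset.sum_eq_zero fun w _ => ?_
      rw [if_neg]
      simp [hb]
    · simp

theorem aux_char {H : Type*} [Group H] [Finite H] (χ : H →* ℂ) (h : H) :
    (starRingEnd ℂ) (χ h) = χ h⁻¹ ∧ χ h * χ h⁻¹ = 1 := by
  have h1 : χ h * χ h⁻¹ = 1 := by rw [← map_mul, mul_inv_cancel, map_one]
  have hn : ‖χ h‖ = 1 := by
    refine Complex.norm_eq_one_of_pow_eq_one (n := Nat.card H) ?_ Nat.card_pos.ne'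
    rw [← map_pow, pow_card_eq_one', map_one]
  refine ⟨?_, h1⟩
  rw [← Complex.inv_eq_conj hn]
  exact (eq_inv_of_mul_eq_one_right h1).symm

theorem sHat_cases {n : ℕ} {H : Type*} [Group H] (G : SimpleGraph (Fin n)) (u v : Fin n) :
    (∃ o : OEdge G, o.1 = (u, v) ∧ ∀ sg : OEdge G → H, sHat G sg u v = sg o) ∨
    (∃ o : OEdge G, o.1 = (v, u) ∧ ∀ sg : OEdge G → H, sHat G sg u v = (sg o)⁻¹) ∨
    (∀ sg : OEdge G → H, sHat G sg u v = 1) := by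
  by_cases h1 : G.Adj u v ∧ u < v
  · exact Or.inl ⟨⟨(u, v), h1⟩, rfl, fun sg => dif_pos h1⟩
  · by_cases h2 : G.Adj v u ∧ v < u
    · exact Or.inr (Or.inl ⟨⟨(v, u), h2⟩, rfl, fun sg => by rw [sHat, dif_neg h1, dif_pos h2]⟩)
    · exact Or.inr (Or.inr fun sg => by rw [sHat, dif_neg h1, dif_neg h2])

theorem sHat_o {n : ℕ} {H : Type*} [Group H] (G : SimpleGraph (Fin n)) (sg : OEdge G → H)
    (o : OEdge G) : sHat G sg o.1.1 o.1.2 = sg o := dif_pos o.2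

/-- The character of the product group attached to a directed edge. -/
def cHom {n : ℕ} {H : Type*} [Group H] (G : SimpleGraph (Fin n)) (χ : H →* ℂ) (u v : Fin n) :
    (OEdge G → H) →* ℂ where
  toFun sg := χ (sHat G sg u v)
  map_one' := by
    rcases sHat_cases G (H := H) u v with ⟨o, _, ho⟩ | ⟨o, _, ho⟩ | ho <;> simp [ho]
  map_mul' a b := by
    rcases sHat_cases G (H := H) u v with ⟨o, _, ho⟩ | ⟨o, _, ho⟩ | ho <;> simp [ho, mul_comm]

theorem sHat_inv {n : ℕ} {H : Type*} [Group H] (G : SimpleGraph (Fin n)) (sg : OEdge G → H)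
    (u v : Fin n) : (sHat G sg u v)⁻¹ = sHat G sg v u := by
  unfold sHat
  by_cases h1 : G.Adj u v ∧ u < v
  · have h2 : ¬ (G.Adj v u ∧ v < u) := fun h => absurd h1.2 (not_lt.mpr h.2.le)
    simp [h1, h2]
  · by_cases h2 : G.Adj v u ∧ v < u
    · simp [h1, h2]
    · simp [h1, h2]

/-- concatenated vertex sequence -/
def cat {V : Type*} (m : ℕ) (x y : ℕ → V) (i : ℕ) : V := if i ≤ m then x i else y (2 * m - i)

theorem cat_le {V : Type*} {m : ℕ} {x y : ℕ → V} {i : ℕ} (h : i ≤ m) : cat m x y i = x i := by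
  simp [cat, h]

theorem cat_ge {V : Type*} {m : ℕ} {x y : ℕ → V} (hm : x m = y m) {i : ℕ} (h : m ≤ i) :
    cat m x y i = y (2 * m - i) := by
  unfold cat
  split_ifs with h'
  · obtain rfl : i = m := by omega
    rw [hm]; congr 1; omega
  · rfl

theorem hike_cat {V : Type*} (G : SimpleGraph V) (m : ℕ) (x y : ℕ → V)
    (hx : ∀ i < m, G.Adj (x i) (x (i + 1))) (hy : ∀ i < m, G.Adj (y i) (y (i + 1)))
    (nx : ∀ i, 1 ≤ i → i < m → x (i - 1) ≠ x (i + 1))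
    (ny : ∀ i, 1 ≤ i → i < m → y (i - 1) ≠ y (i + 1))
    (h0 : x 0 = y 0) (hm : x m = y m) : IsHike G m (fun i => cat m x y i.1) := by
  refine ⟨?_, ?_, ?_⟩
  · intro i h
    show G.Adj (cat m x y i) (cat m x y (i + 1))
    by_cases h' : i < m
    · rw [cat_le h'.le, cat_le (by omega)]; exact hx i h'
    · rw [cat_ge hm (by omega), cat_ge hm (by omega)]
      have := (hy (2 * m - (i + 1)) (by omega)).symm
      rwa [show 2 * m - (i + 1) + 1 = 2 * m - i by omega] at this
  · show cat m x y (2 * m) = cat m x y 0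
    rw [cat_ge hm (by omega : m ≤ 2 * m), cat_le (by omega)]; simp [h0]
  · intro i h1 h2 h3
    show cat m x y (i + 1) ≠ cat m x y (i - 1)
    by_cases h' : i < m
    · rw [cat_le (by omega), cat_le (by omega)]; exact (nx i h1 h').symm
    · rw [cat_ge hm (by omega), cat_ge hm (by omega)]
      have := ny (2 * m - i) (by omega) (by omega)
      rwa [show 2 * m - i - 1 = 2 * m - (i + 1) by omega,
        show 2 * m - i + 1 = 2 * m - (i - 1) by omega] at this

theorem prod_cat {V M : Type*} [CommMonoid M] (m : ℕ) (x y : ℕ → V) (g : V → V → M)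
    (hm : x m = y m) :
    ∏ i : Fin (2 * m), g (cat m x y i.1) (cat m x y (i.1 + 1)) =
      (∏ i ∈ Finset.range m, g (x i) (x (i + 1))) *
        ∏ i ∈ Finset.range m, g (y (i + 1)) (y i) := by
  rw [Fin.prod_univ_eq_prod_range (fun i => g (cat m x y i) (cat m x y (i + 1))) (2 * m), two_mul,
    Finset.prod_range_add]
  congr 1
  · refine Finset.prod_congr rfl fun i hi => ?_
    rw [Finset.mem_range] at hi
    rw [cat_le hi.le, cat_le (by omega)]
  · rw [← Finset.prod_range_reflect (fun i => g (y (i + 1)) (y i))]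
    refine Finset.prod_congr rfl fun i hi => ?_
    rw [Finset.mem_range] at hi
    rw [cat_ge hm (by omega), cat_ge hm (by omega)]
    congr 2 <;> omega

theorem aux_nontriv {n : ℕ} {H : Type*} [Group H] [Finite H] (G : SimpleGraph (Fin n))
    (χ : H →* ℂ) (hχ : χ ≠ 1) (m : ℕ) (f : Fin (2 * m + 1) → Fin n)
    (hadj : ∀ i : Fin (2 * m), G.Adj (f i.castSucc) (f i.succ))
    (hs : ¬ IsSingletonFree m f) :
    ∏ i : Fin (2 * m), cHom G χ (f i.castSucc) (f i.succ) ≠ 1 := by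
  unfold IsSingletonFree at hs
  push Not at hs
  obtain ⟨e, he⟩ := hs
  unfold edgeCount at he
  obtain ⟨i0, hi0⟩ := Finset.card_eq_one.mp he
  have hmem : ∀ i : Fin (2 * m), s(f i.castSucc, f i.succ) = e ↔ i = i0 := by
    intro i
    have := Finset.ext_iff.mp hi0 i
    simp only [Finset.mem_filter, Finset.mem_univ, true_and, Finset.mem_singleton] at this
    exact this
  obtain ⟨h, hh⟩ : ∃ h, χ h ≠ 1 := by
    by_contra! hc
    exact hχ (MonoidHom.ext hc)
  have hh' : χ h⁻¹ ≠ 1 := by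
    intro hc
    have := (aux_char χ h).2
    rw [hc, mul_one] at this
    exact hh this
  have he0 := (hmem i0).mpr rfl
  have ha0 := hadj i0
  obtain ⟨o, ho⟩ : ∃ o : OEdge G, s(o.1.1, o.1.2) = e := by
    rcases lt_or_gt_of_ne ha0.ne with hl | hl
    · exact ⟨⟨(_, _), ha0, hl⟩, he0⟩
    · exact ⟨⟨(_, _), ha0.symm, hl⟩, by rw [← he0]; exact Sym2.eq_swap⟩
  intro hone
  have hval := DFunLike.congr_fun hone (Pi.mulSingle o h)
  rw [MonoidHom.finsetProd_apply, Finset.prod_eq_single i0] at hval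
  · change χ (sHat G _ _ _) = 1 at hval
    rw [← ho] at he0
    rcases Sym2.eq_iff.mp he0 with ⟨h1, h2⟩ | ⟨h1, h2⟩
    · rw [h1, h2, sHat_o, Pi.mulSingle_eq_same] at hval
      exact hh hval
    · rw [h1, h2, ← sHat_inv, sHat_o, Pi.mulSingle_eq_same] at hval
      exact hh' hval
  · intro i _ hi
    have hne : s(f i.castSucc, f i.succ) ≠ e := fun hc => hi ((hmem i).mp hc)
    show χ (sHat G _ _ _) = 1
    rcases sHat_cases G (H := H) (f i.castSucc) (f i.succ) with ⟨o', h1, ho'⟩ | ⟨o', h1, ho'⟩ | ho'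
    · rw [ho', Pi.mulSingle_eq_of_ne, map_one]
      rintro rfl
      exact hne (by rw [← ho, h1])
    · rw [ho', Pi.mulSingle_eq_of_ne, inv_one, map_one]
      rintro rfl
      exact hne (by rw [← ho, h1]; exact Sym2.eq_swap)
    · rw [ho']; exact map_one _
  · simp

theorem card_walks {n d : ℕ} (G : SimpleGraph (Fin n)) (hreg : G.IsRegularOfDegree d) (N : ℕ) :
    (Finset.univ.filter fun f : Fin (N + 1) → Fin n =>
      ∀ i : Fin N, G.Adj (f i.castSucc) (f i.succ)).card ≤ n * d ^ N := by
  induction N with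
  | zero => simp
  | succ N ih =>
    have := Finset.card_le_mul_card_image_of_maps_to
      (s := Finset.univ.filter fun f : Fin (N + 1 + 1) → Fin n =>
        ∀ i : Fin (N + 1), G.Adj (f i.castSucc) (f i.succ))
      (t := Finset.univ.filter fun f : Fin (N + 1) → Fin n =>
        ∀ i : Fin N, G.Adj (f i.castSucc) (f i.succ))
      (f := fun f => (fun i => f i.castSucc)) ?_ d ?_
    · refine this.trans ?_
      rw [pow_succ]
      nlinarith
    · intro f hf
      simp only [Finset.coe_filter, Finset.mem_univ, true_and, Set.mem_ofPred_eq, Finset.mem_filter] at hf ⊢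
      intro i
      exact hf i.castSucc
    · intro g hg
      rw [← hreg (g (Fin.last N)), ← SimpleGraph.card_neighborFinset_eq_degree]
      refine Finset.card_le_card_of_injOn (fun f => f (Fin.last _)) ?_ ?_
      · intro f hf
        simp only [Finset.coe_filter, Finset.mem_filter, Finset.mem_univ, true_and,
          Set.mem_ofPred_eq] at hf
        rw [Finset.mem_coe, SimpleGraph.mem_neighborFinset, ← hf.2]
        exact hf.1 (Fin.last N)
      · intro f hf f' hf' hff
        simp only [Finset.coe_filter, Finset.mem_filter, Finset.mem_univ, true_and,
          Set.mem_ofPred_eq] at hf hf'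
        funext i
        refine Fin.lastCases hff (fun i => ?_) i
        exact congrFun (hf.2.trans hf'.2.symm) i

theorem aux_frob {ι : Type*} [Fintype ι] [DecidableEq ι] (M : Matrix ι ι ℂ) (j : ℕ) :
    ((∑ p, ∑ q, ‖(M ^ j) p q‖ ^ 2 : ℝ) : ℂ) =
      ∑ ww : (Fin (j + 1) → ι) × (Fin (j + 1) → ι),
        if ww.1 0 = ww.2 0 ∧ ww.1 (Fin.last j) = ww.2 (Fin.last j) then
          (∏ i : Fin j, M (ww.1 i.castSucc) (ww.1 i.succ)) *
            (starRingEnd ℂ) (∏ i : Fin j, M (ww.2 i.castSucc) (ww.2 i.succ)) else 0 := by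
  have h1 : ((∑ p, ∑ q, ‖(M ^ j) p q‖ ^ 2 : ℝ) : ℂ) =
      ∑ p, ∑ q, ∑ ww : (Fin (j + 1) → ι) × (Fin (j + 1) → ι),
        if (ww.1 0 = p ∧ ww.1 (Fin.last j) = q) ∧ (ww.2 0 = p ∧ ww.2 (Fin.last j) = q) then
          (∏ i : Fin j, M (ww.1 i.castSucc) (ww.1 i.succ)) *
            (starRingEnd ℂ) (∏ i : Fin j, M (ww.2 i.castSucc) (ww.2 i.succ)) else 0 := by
    push_cast
    refine Finset.sum_congr rfl fun p _ => Finset.sum_congr rfl fun q _ => ?_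
    rw [← Complex.mul_conj', aux_pow, map_sum, Finset.sum_mul_sum, Fintype.sum_prod_type]
    refine Finset.sum_congr rfl fun w _ => Finset.sum_congr rfl fun w' _ => ?_
    rw [apply_ite (starRingEnd ℂ), map_zero, ite_and (_ ∧ _)]
    split_ifs <;> simp
  rw [h1]
  simp_rw [Finset.sum_comm (s := Finset.univ (α := ι))
    (t := Finset.univ (α := (Fin (j + 1) → ι) × (Fin (j + 1) → ι)))]
  refine Finset.sum_congr rfl fun ww _ => ?_
  rw [Finset.sum_eq_single (ww.1 0), Finset.sum_eq_single (ww.1 (Fin.last j))]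
  · simp only [true_and, and_self]
    congr 1
    simp only [eq_comm]
  · intro b _ hb
    rw [if_neg (fun h => hb h.1.2.symm)]
  · simp
  · intro b _ hb
    refine Finset.sum_eq_zero fun c _ => ?_
    rw [if_neg (fun h => hb h.1.1.symm)]
  · simp

/-- vertex sequence of a sequence of directed edges -/
def xs {n : ℕ} {G : SimpleGraph (Fin n)} {m : ℕ} (w : Fin (m + 2) → DEdge G) (i : ℕ) : Fin n :=
  (w (Fin.ofNat (m + 2) i)).1.2

/-- non-backtracking sequences of directed edges -/
def NB {n : ℕ} {G : SimpleGraph (Fin n)} {m : ℕ} (w : Fin (m + 2) → DEdge G) : Prop :=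
  ∀ i : Fin (m + 1), (w i.castSucc).1.2 = (w i.succ).1.1 ∧ (w i.castSucc).1.1 ≠ (w i.succ).1.2

theorem NB.fst {n : ℕ} {G : SimpleGraph (Fin n)} {m : ℕ} {w : Fin (m + 2) → DEdge G}
    (h : NB w) {i : ℕ} (hi : i ≤ m) : (w (Fin.ofNat (m + 2) (i + 1))).1.1 = xs w i ∧
      (w (Fin.ofNat (m + 2) i)).1.1 ≠ xs w (i + 1) := by
  have := h ⟨i, by omega⟩
  have e1 : (⟨i, by omega⟩ : Fin (m + 1)).castSucc = Fin.ofNat (m + 2) i := by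
    ext; simp [Nat.mod_eq_of_lt (show i < m + 2 by omega)]
  have e2 : (⟨i, by omega⟩ : Fin (m + 1)).succ = Fin.ofNat (m + 2) (i + 1) := by
    ext; simp [Nat.mod_eq_of_lt (show i + 1 < m + 2 by omega)]
  rw [e1, e2] at this
  exact ⟨this.1.symm, this.2⟩

theorem NB.adj {n : ℕ} {G : SimpleGraph (Fin n)} {m : ℕ} {w : Fin (m + 2) → DEdge G}
    (h : NB w) {i : ℕ} (hi : i ≤ m) : G.Adj (xs w i) (xs w (i + 1)) := by
  rw [← (h.fst hi).1]
  exact (w (Fin.ofNat (m + 2) (i + 1))).2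

theorem NB.ne {n : ℕ} {G : SimpleGraph (Fin n)} {m : ℕ} {w : Fin (m + 2) → DEdge G}
    (h : NB w) {i : ℕ} (h1 : 1 ≤ i) (hi : i ≤ m) : xs w (i - 1) ≠ xs w (i + 1) := by
  obtain ⟨i, rfl⟩ : ∃ j, i = j + 1 := ⟨i - 1, by omega⟩
  have := (h.fst hi).2
  rwa [(h.fst (i := i) (by omega)).1] at this

theorem NB.ext {n : ℕ} {G : SimpleGraph (Fin n)} {m : ℕ} {w v : Fin (m + 2) → DEdge G}
    (hw : NB w) (hv : NB v) (h0 : (w 0).1.1 = (v 0).1.1)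
    (h : ∀ i ≤ m + 1, xs w i = xs v i) : w = v := by
  funext i
  have hi : i = Fin.ofNat (m + 2) i.1 := by ext; simp [Nat.mod_eq_of_lt i.2]
  refine Subtype.ext (Prod.ext ?_ ?_)
  · obtain ⟨j, hj⟩ := i
    cases j with
    | zero => exact h0
    | succ j =>
      rw [hi, (hw.fst (by omega)).1, (hv.fst (by omega)).1]
      exact h j (by omega)
  · rw [hi]; exact h i.1 (by omega)

/-- The hike -/
def hikeOf {n : ℕ} {G : SimpleGraph (Fin n)} {m : ℕ}
    (ww : (Fin (m + 2) → DEdge G) × (Fin (m + 2) → DEdge G)) (i : Fin (2 * m + 1)) : Fin n :=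
  cat m (xs ww.1) (xs ww.2) i.1

/-- Pairs with the same endpoints. -/
def Good {n : ℕ} {G : SimpleGraph (Fin n)} {m : ℕ}
    (ww : (Fin (m + 2) → DEdge G) × (Fin (m + 2) → DEdge G)) : Prop :=
  NB ww.1 ∧ NB ww.2 ∧ ww.1 0 = ww.2 0 ∧ ww.1 (Fin.last _) = ww.2 (Fin.last _)

theorem ofNat_last (m : ℕ) : Fin.ofNat (m + 2) (m + 1) = Fin.last (m + 1) := by
  ext; simp

theorem Good.ends {n : ℕ} {G : SimpleGraph (Fin n)} {m : ℕ}
    {ww : (Fin (m + 2) → DEdge G) × (Fin (m + 2) → DEdge G)} (h : Good ww) :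
    xs ww.1 0 = xs ww.2 0 ∧ xs ww.1 m = xs ww.2 m ∧ xs ww.1 (m + 1) = xs ww.2 (m + 1) := by
  obtain ⟨h1, h2, h3, h4⟩ := h
  refine ⟨congrArg (fun e : DEdge G => e.1.2) h3, ?_, ?_⟩
  · rw [← (h1.fst le_rfl).1, ← (h2.fst le_rfl).1, ofNat_last, h4]
  · unfold xs; rw [ofNat_last, h4]

theorem Good.hike {n : ℕ} {G : SimpleGraph (Fin n)} {m : ℕ}
    {ww : (Fin (m + 2) → DEdge G) × (Fin (m + 2) → DEdge G)} (h : Good ww) :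
    IsHike G m (hikeOf ww) :=
  hike_cat G m _ _ (fun _ hi => h.1.adj hi.le) (fun _ hi => h.2.1.adj hi.le)
    (fun _ h1 hi => h.1.ne h1 hi.le) (fun _ h1 hi => h.2.1.ne h1 hi.le) h.ends.1 h.ends.2.1

theorem fiber_card {n d : ℕ} {G : SimpleGraph (Fin n)} (hreg : G.IsRegularOfDegree d) {m : ℕ}
    (f : Fin (2 * m + 1) → Fin n)
    (S : Finset ((Fin (m + 2) → DEdge G) × (Fin (m + 2) → DEdge G)))
    (hS : ∀ ww ∈ S, Good ww ∧ hikeOf ww = f) : S.card ≤ d ^ 2 := by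
  have hc : (G.neighborFinset (f ⟨0, by omega⟩) ×ˢ G.neighborFinset (f ⟨m, by omega⟩)).card
      = d ^ 2 := by
    rw [Finset.card_product, SimpleGraph.card_neighborFinset_eq_degree,
      SimpleGraph.card_neighborFinset_eq_degree, hreg, hreg, sq]
  rw [← hc]
  have hx : ∀ ww ∈ S, ∀ i (hi : i ≤ m), xs ww.1 i = f ⟨i, by omega⟩ := by
    intro ww hww i hi
    rw [← (hS ww hww).2]
    exact (cat_le hi).symm
  have hy : ∀ ww ∈ S, ∀ i (hi : i ≤ m), xs ww.2 i = f ⟨2 * m - i, by omega⟩ := by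
    intro ww hww i hi
    rw [← (hS ww hww).2]
    show _ = cat m _ _ (2 * m - i)
    rw [cat_ge (hS ww hww).1.ends.2.1 (by omega)]
    congr 1; omega
  refine Finset.card_le_card_of_injOn (fun ww => ((ww.1 0).1.1, xs ww.1 (m + 1))) ?_ ?_
  · intro ww hww
    rw [Finset.mem_coe] at hww
    rw [Finset.mem_coe, Finset.mem_product, SimpleGraph.mem_neighborFinset,
      SimpleGraph.mem_neighborFinset, ← hx ww hww 0 (by omega), ← hx ww hww m le_rfl]
    exact ⟨(ww.1 0).2.symm, (hS ww hww).1.1.adj le_rfl⟩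
  · intro ww hww vv hvv he
    rw [Finset.mem_coe] at hww hvv
    have e1 : (ww.1 0).1.1 = (vv.1 0).1.1 := (Prod.ext_iff.mp he).1
    have e2 : xs ww.1 (m + 1) = xs vv.1 (m + 1) := (Prod.ext_iff.mp he).2
    have gw := (hS ww hww).1
    have gv := (hS vv hvv).1
    refine Prod.ext (gw.1.ext gv.1 e1 fun i hi => ?_) (gw.2.1.ext gv.2.1 ?_ fun i hi => ?_)
    · rcases Nat.lt_or_ge m i with h | h
      · obtain rfl : i = m + 1 := by omega
        exact e2
      · rw [hx ww hww i h, hx vv hvv i h]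
    · rw [← gw.2.2.1, ← gv.2.2.1, e1]
    · rcases Nat.lt_or_ge m i with h | h
      · obtain rfl : i = m + 1 := by omega
        rw [← gw.ends.2.2, ← gv.ends.2.2, e2]
      · rw [hy ww hww i h, hy vv hvv i h]

theorem wt_nb {n : ℕ} {H : Type*} [Group H] (G : SimpleGraph (Fin n)) (sg : OEdge G → H)
    (χ : H →* ℂ) {m : ℕ} (w : Fin (m + 2) → DEdge G) :
    ∏ i : Fin (m + 1), Bmat G sg χ (w i.castSucc) (w i.succ) =
      if NB w then ∏ i ∈ Finset.range (m + 1), χ (sHat G sg (xs w i) (xs w (i + 1))) else 0 := by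
  split_ifs with h
  · rw [← Fin.prod_univ_eq_prod_range (fun i => χ (sHat G sg (xs w i) (xs w (i + 1)))) (m + 1)]
    refine Finset.prod_congr rfl fun i _ => ?_
    rw [Bmat, if_pos (h i), ← (h i).1]
    have e1 : i.castSucc = Fin.ofNat (m + 2) i := by
      ext; simp [Nat.mod_eq_of_lt (show i.1 < m + 2 by omega)]
    have e2 : i.succ = Fin.ofNat (m + 2) (i + 1) := by
      ext; simp [Nat.mod_eq_of_lt (show i.1 + 1 < m + 2 by omega)]
    rw [e1, e2]; rfl
  · unfold NB at h
    push Not at h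
    obtain ⟨i, hi⟩ := h
    refine Finset.prod_eq_zero (Finset.mem_univ i) ?_
    rw [Bmat, if_neg]
    rintro ⟨h1, h2⟩
    exact h2 (hi h1)

/-- the character of the pair -/
def psi {n : ℕ} {H : Type*} [Group H] (G : SimpleGraph (Fin n)) (χ : H →* ℂ) {m : ℕ}
    (f : Fin (2 * m + 1) → Fin n) : (OEdge G → H) →* ℂ :=
  ∏ i : Fin (2 * m), cHom G χ (f i.castSucc) (f i.succ)

theorem frob_eq {n : ℕ} {H : Type*} [Group H] [Finite H] (G : SimpleGraph (Fin n))
    (sg : OEdge G → H) (χ : H →* ℂ) (m : ℕ) :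
    ((∑ p, ∑ q, ‖((Bmat G sg χ) ^ (m + 1)) p q‖ ^ 2 : ℝ) : ℂ) =
      ∑ ww ∈ Finset.univ.filter
        (fun ww : (Fin (m + 2) → DEdge G) × (Fin (m + 2) → DEdge G) => Good ww),
        psi G χ (hikeOf ww) sg := by
  rw [aux_frob, Finset.sum_filter]
  refine Finset.sum_congr rfl fun ww _ => ?_
  rw [wt_nb, wt_nb]
  by_cases hg : Good ww
  · rw [if_pos hg, if_pos hg.2.2, if_pos hg.1, if_pos hg.2.1]
    have hp : psi G χ (hikeOf ww) sg = ∏ i : Fin (2 * m), χ (sHat G sg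
        (cat m (xs ww.1) (xs ww.2) i.1) (cat m (xs ww.1) (xs ww.2) (i.1 + 1))) := by
      rw [psi, MonoidHom.finsetProd_apply]; rfl
    rw [hp, prod_cat m _ _ (fun u v => χ (sHat G sg u v)) hg.ends.2.1, map_prod,
      Finset.prod_range_succ, Finset.prod_range_succ, hg.ends.2.1, hg.ends.2.2]
    simp_rw [fun h => (aux_char χ h).1]
    have := (aux_char χ (sHat G sg (xs ww.2 m) (xs ww.2 (m + 1)))).2
    rw [mul_mul_mul_comm, this, mul_one]
    simp_rw [sHat_inv]
  · rw [if_neg hg]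
    unfold Good at hg
    split_ifs <;> first | (exfalso; tauto) | simp

theorem expect_bound {n d : ℕ} {H : Type*} [Group H] [Fintype H] (G : SimpleGraph (Fin n))
    (hreg : G.IsRegularOfDegree d) (χ : H →* ℂ) (hχ : χ ≠ 1) (m : ℕ) (ν : ℝ) (hν0 : 0 ≤ ν)
    (D : (OEdge G → H) → ℝ) (hD0 : ∀ x, 0 ≤ D x) (hD1 : ∑ x, D x = 1)
    (hbias : ∀ ψ : (OEdge G → H) →* ℂ, ψ ≠ 1 → ‖∑ x, (D x : ℂ) * ψ x‖ ≤ ν) :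
    ∑ sg, D sg * ∑ p, ∑ q, ‖((Bmat G sg χ) ^ (m + 1)) p q‖ ^ 2 ≤
      d ^ 2 * ({f : Fin (2 * m + 1) → Fin n | IsHike G m f ∧ IsSingletonFree m f}.ncard : ℝ)
        + d ^ 2 * (n * d ^ (2 * m)) * ν := by
  set T := Finset.univ.filter
        (fun ww : (Fin (m + 2) → DEdge G) × (Fin (m + 2) → DEdge G) => Good ww) with hT
  have hpsi1 : ∀ (f : Fin (2 * m + 1) → Fin n) sg, ‖psi G χ f sg‖ = 1 := by
    intro f sg
    rw [psi, MonoidHom.finsetProd_apply, norm_prod]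
    refine Finset.prod_eq_one fun i _ => ?_
    refine Complex.norm_eq_one_of_pow_eq_one (n := Nat.card H) ?_ Nat.card_pos.ne'
    show (χ _) ^ _ = 1
    rw [← map_pow, pow_card_eq_one', map_one]
  have e1 : ((∑ sg, D sg * ∑ p, ∑ q, ‖((Bmat G sg χ) ^ (m + 1)) p q‖ ^ 2 : ℝ) : ℂ) =
      ∑ ww ∈ T, ∑ sg, (D sg : ℂ) * psi G χ (hikeOf ww) sg := by
    rw [Complex.ofReal_sum, Finset.sum_comm]
    refine Finset.sum_congr rfl fun sg _ => ?_
    rw [Complex.ofReal_mul, frob_eq, Finset.mul_sum]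
  have e2 : ∑ sg, D sg * ∑ p, ∑ q, ‖((Bmat G sg χ) ^ (m + 1)) p q‖ ^ 2 ≤
      ∑ ww ∈ T, ((if IsSingletonFree m (hikeOf ww) then 1 else 0) + ν) := by
    refine (Real.le_norm_self _).trans ?_
    rw [← Complex.norm_real, e1]
    refine (norm_sum_le _ _).trans (Finset.sum_le_sum fun ww hww => ?_)
    have hg : Good ww := (Finset.mem_filter.mp hww).2
    split_ifs with hs
    · have : ‖∑ sg, (D sg : ℂ) * psi G χ (hikeOf ww) sg‖ ≤ 1 := by
        refine (norm_sum_le _ _).trans (le_of_eq ?_)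
        rw [← hD1]
        refine Finset.sum_congr rfl fun sg _ => ?_
        rw [norm_mul, hpsi1, mul_one, Complex.norm_real, Real.norm_of_nonneg (hD0 sg)]
      linarith
    · rw [zero_add]
      exact hbias _ (aux_nontriv G χ hχ m _ (fun i => hg.hike.1 i.1 i.2) hs)
  refine e2.trans ?_
  rw [Finset.sum_add_distrib, Finset.sum_const, nsmul_eq_mul, ← Finset.sum_filter,
    Finset.sum_const, nsmul_eq_mul, mul_one]
  refine add_le_add ?_ (mul_le_mul_of_nonneg_right ?_ hν0)
  · rw [Set.ncard_eq_toFinset_card']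
    have := Finset.card_le_mul_card_image_of_maps_to
      (s := T.filter fun ww => IsSingletonFree m (hikeOf ww))
      (t := {f : Fin (2 * m + 1) → Fin n | IsHike G m f ∧ IsSingletonFree m f}.toFinset)
      (f := hikeOf) ?_ (d ^ 2) ?_
    · exact_mod_cast this
    · intro ww hww
      simp only [hT, Finset.mem_filter, Finset.mem_univ, true_and] at hww
      rw [Set.mem_toFinset]
      exact ⟨hww.1.hike, hww.2⟩
    · intro f _
      refine fiber_card hreg f _ fun ww hww => ?_
      simp only [hT, Finset.mem_filter, Finset.mem_univ, true_and] at hww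
      exact ⟨hww.1.1, hww.2⟩
  · have := Finset.card_le_mul_card_image_of_maps_to
      (s := T)
      (t := Finset.univ.filter fun f : Fin (2 * m + 1) → Fin n =>
        ∀ i : Fin (2 * m), G.Adj (f i.castSucc) (f i.succ))
      (f := hikeOf) ?_ (d ^ 2) ?_
    · have h2 := this.trans (Nat.mul_le_mul_left _ (card_walks G hreg (2 * m)))
      exact_mod_cast h2
    · intro ww hww
      simp only [hT, Finset.mem_filter, Finset.mem_univ, true_and] at hww ⊢
      exact fun i => hww.hike.1 i.1 i.2
    · intro f _
      refine fiber_card hreg f _ fun ww hww => ?_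
      simp only [hT, Finset.mem_filter, Finset.mem_univ, true_and] at hww
      exact ⟨hww.1, hww.2⟩

/-- Given the counting bound on singleton-free hikes and a sufficiently small bias `ν`,
the spectral radius of `B_s(χ)` is, with probability at least `1 - 1/ℓ` over a `ν`-biased
signing, at most `2^γ'·√(d-1) + ε`. -/
theorem stmt13 {n d ℓ k : ℕ} (hd : 3 ≤ d) (hk : 1 ≤ k) (hℓ : 1 ≤ ℓ)
    (ε : ℝ) (hε0 : 0 < ε) (hε1 : ε < 1)
    (G : SimpleGraph (Fin n)) (hreg : G.IsRegularOfDegree d)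
    (Hsub : Subgroup (Equiv.Perm (Fin ℓ))) (habel : ∀ a b : Hsub, a * b = b * a)
    (ν γ : ℝ)
    (D : (OEdge G → Hsub) → ℝ) (hD0 : ∀ x, 0 ≤ D x) (hD1 : ∑ x, D x = 1)
    (hbias : ∀ ψ : (OEdge G → Hsub) →* ℂ, ψ ≠ 1 →
      ‖∑ x, (D x : ℂ) * ψ x‖ ≤ ν)
    (hν : ν ≤ ((n : ℝ) * ℓ * d ^ 2)⁻¹ * (ε / d) ^ (2 * k))
    (hcount : ({f : Fin (2 * (k - 1) + 1) → Fin n |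
        IsHike G (k - 1) f ∧ IsSingletonFree (k - 1) f}.ncard : ℝ)
        ≤ ((2 : ℝ) ^ γ * Real.sqrt ((d : ℝ) - 1)) ^ (2 * k))
    (χ : Hsub →* ℂ) (hχ : χ ≠ 1) :
    ∑ sg ∈ Finset.univ.filter (fun sg : OEdge G → Hsub =>
        ¬ ∀ μ ∈ spectrum ℂ (Bmat G sg χ), ‖μ‖ ≤
            (2 : ℝ) ^ (γ + Real.logb 2 ((ℓ : ℝ) * d ^ 2) / (2 * k)) *
              Real.sqrt ((d : ℝ) - 1) + ε),
      D sg ≤ 1 / ℓ := by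
  
  obtain ⟨m, rfl⟩ : ∃ m, k = m + 1 := ⟨k - 1, by omega⟩
  rw [Nat.add_sub_cancel] at hcount
  have hd' : (3 : ℝ) ≤ d := by exact_mod_cast hd
  have hdpos : (0 : ℝ) < d := by linarith
  have hℓ' : (1 : ℝ) ≤ ℓ := by exact_mod_cast hℓ
  have hℓpos : (0 : ℝ) < ℓ := by linarith
  set ν' := max ν 0 with hν'
  have hν'le : ν' ≤ ((n : ℝ) * ℓ * d ^ 2)⁻¹ * (ε / d) ^ (2 * (m + 1)) :=
    max_le hν (by positivity)
  have hE := expect_bound G hreg χ hχ m ν' (le_max_right _ _) D hD0 hD1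
    (fun ψ hψ => (hbias ψ hψ).trans (le_max_left _ _))
  set X := ((2 : ℝ) ^ γ * Real.sqrt ((d : ℝ) - 1)) ^ (2 * (m + 1)) with hX
  have hEb : ℓ * (∑ sg, D sg * ∑ p, ∑ q, ‖((Bmat G sg χ) ^ (m + 1)) p q‖ ^ 2) ≤
      ℓ * d ^ 2 * X + ε ^ (2 * (m + 1)) := by
    have hnν : (n : ℝ) * ν' ≤ ((ℓ : ℝ) * d ^ 2)⁻¹ * (ε / d) ^ (2 * (m + 1)) := by
      rcases Nat.eq_zero_or_pos n with h0 | h0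
      · have : (n : ℝ) = 0 := by exact_mod_cast h0
        rw [this, zero_mul]; positivity
      · have hn : (0 : ℝ) < n := by exact_mod_cast h0
        refine (mul_le_mul_of_nonneg_left hν'le hn.le).trans (le_of_eq ?_)
        field_simp
    have h2 : ℓ * ((d : ℝ) ^ 2 * (n * d ^ (2 * m)) * ν') ≤ ε ^ (2 * (m + 1)) := by
      calc ℓ * ((d : ℝ) ^ 2 * (n * d ^ (2 * m)) * ν')
          = ℓ * (d : ℝ) ^ (2 * (m + 1)) * (n * ν') := by ring
        _ ≤ ℓ * (d : ℝ) ^ (2 * (m + 1)) * (((ℓ : ℝ) * d ^ 2)⁻¹ * (ε / d) ^ (2 * (m + 1))) := by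
            gcongr
        _ = ε ^ (2 * (m + 1)) / d ^ 2 := by
            rw [div_pow]; field_simp
        _ ≤ ε ^ (2 * (m + 1)) := by
            apply div_le_self (by positivity)
            nlinarith
    refine (mul_le_mul_of_nonneg_left hE hℓpos.le).trans ?_
    calc _ ≤ (ℓ : ℝ) * ((d : ℝ) ^ 2 * X + (d : ℝ) ^ 2 * (n * d ^ (2 * m)) * ν') := by gcongr
      _ ≤ _ := by rw [mul_add]; linarith
  set T := (2 : ℝ) ^ (γ + Real.logb 2 ((ℓ : ℝ) * d ^ 2) / (2 * ((m + 1 : ℕ) : ℝ))) *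
              Real.sqrt ((d : ℝ) - 1) + ε with hTdef
  have hTpos : 0 < T := by positivity
  have hTp : ℓ * d ^ 2 * X + ε ^ (2 * (m + 1)) ≤ T ^ (2 * (m + 1)) := by
    refine le_trans (le_of_eq ?_) (pow_add_pow_le (by positivity) hε0.le (by omega))
    congr 1
    have h3 : ((2 : ℝ) ^ (Real.logb 2 ((ℓ : ℝ) * d ^ 2) / (2 * ((m + 1 : ℕ) : ℝ)))) ^ (2 * (m + 1))
        = ℓ * d ^ 2 := by
      have h4 : Real.logb 2 ((ℓ : ℝ) * d ^ 2) / (2 * ((m + 1 : ℕ) : ℝ)) *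
          ((2 * (m + 1) : ℕ) : ℝ) = Real.logb 2 ((ℓ : ℝ) * d ^ 2) := by
        push_cast; field_simp
      rw [← Real.rpow_mul_natCast two_pos.le, h4,
        Real.rpow_logb two_pos (by norm_num) (by positivity)]
    rw [Real.rpow_add two_pos, hX, ← h3, ← mul_pow]
    congr 1
    rw [h3]
    ring
  rw [le_div_iff₀ hℓpos]
  have hM : (∑ sg ∈ Finset.univ.filter (fun sg : OEdge G → Hsub =>
        ¬ ∀ μ ∈ spectrum ℂ (Bmat G sg χ), ‖μ‖ ≤ T), D sg) * T ^ (2 * (m + 1)) ≤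
      ∑ sg, D sg * ∑ p, ∑ q, ‖((Bmat G sg χ) ^ (m + 1)) p q‖ ^ 2 := by
    rw [Finset.sum_mul]
    refine le_trans (Finset.sum_le_sum fun sg hsg => ?_)
      (Finset.sum_le_sum_of_subset_of_nonneg (Finset.filter_subset _ _) fun sg _ _ =>
        mul_nonneg (hD0 sg) (by positivity))
    have hb := (Finset.mem_filter.mp hsg).2
    push Not at hb
    obtain ⟨μ, hμ, hlt⟩ := hb
    refine mul_le_mul_of_nonneg_left ?_ (hD0 sg)
    have h1 := aux_spec _ _ (spectrum.pow_mem_pow (Bmat G sg χ) (m + 1) hμ)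
    refine le_trans ?_ h1
    rw [norm_pow, ← pow_mul, mul_comm (m + 1) 2]
    gcongr
  have hTpp : 0 < T ^ (2 * (m + 1)) := by positivity
  refine le_of_mul_le_mul_right ?_ hTpp
  calc _ = ℓ * ((∑ sg ∈ Finset.univ.filter (fun sg : OEdge G → Hsub =>
        ¬ ∀ μ ∈ spectrum ℂ (Bmat G sg χ), ‖μ‖ ≤ T), D sg) * T ^ (2 * (m + 1))) := by ring
    _ ≤ _ := mul_le_mul_of_nonneg_left hM hℓpos.le
    _ ≤ _ := hEb
    _ ≤ 1 * T ^ (2 * (m + 1)) := by rw [one_mul]; exact hTp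
end
end
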